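/- arXiv:1801.00120 — 6 statements merged into one kernel-verified Lean document; each statement's English description precedes it below -/
import Mathlib

section
/- Let α, β, μ ∈ (−1, ∞) and ν ∈ [0, ∞). Then ∫₀¹ ∫₀¹ t^μ (1−t)^α |t−s|^β s^ν ds dt ≤ B(μ+ν+β+2, α+1)·B(β+1, ν+1) + (1/(β+1))·B(μ+1, α+β+2). -/
/-- The Euler Beta function, `B(x,y) = ∫₀¹ u^{x−1}(1−u)^{y−1} du`. -/
noncomputable def betaB (x y : ℝ) : ℝ := ∫ u in (0:ℝ)..1, u ^ (x - 1) * (1 - u) ^ (y - 1)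

/-!
For fixed `t ∈ (0, 1)` the inner integral is split at `s = t`. On `[0, t]` the substitution
`s = t (1 - u)` evaluates it exactly as a power of `t` times a Beta value; on `[t, 1]` the factor
`s ^ ν` is at most `1` and the remaining power of `s - t` is integrated explicitly. Multiplying by
`t ^ μ (1 - t) ^ α` turns both contributions into Beta integrands in `t`.
-/

open MeasureTheory Set

lemma betaB_add_one_add_one (a b : ℝ) :
    betaB (a + 1) (b + 1) = ∫ u in (0 : ℝ)..1, u ^ a * (1 - u) ^ b := by
  simp only [betaB, add_sub_cancel_right]

lemma intervalIntegrable_rpow_mul_one_sub_rpow {a b : ℝ} (ha : -1 < a) (hb : -1 < b) :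
    IntervalIntegrable (fun u : ℝ ↦ u ^ a * (1 - u) ^ b) volume 0 1 := by
  have h_complex := (Complex.betaIntegral_convergent (u := ((a + 1 : ℝ) : ℂ))
    (v := ((b + 1 : ℝ) : ℂ)) (by rw [Complex.ofReal_re]; linarith)
    (by rw [Complex.ofReal_re]; linarith)).norm
  rw [intervalIntegrable_iff_integrableOn_Ioo_of_le zero_le_one] at h_complex ⊢
  refine h_complex.congr_fun (fun u hu ↦ ?_) measurableSet_Ioo
  have h_cast : 1 - (u : ℂ) = ((1 - u : ℝ) : ℂ) := by push_cast; rfl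
  simp only [norm_mul, h_cast, Complex.norm_cpow_eq_rpow_re_of_pos hu.1,
    Complex.norm_cpow_eq_rpow_re_of_pos (sub_pos.2 hu.2), Complex.sub_re, Complex.ofReal_re,
    Complex.one_re, add_sub_cancel_right]

-- When `f` is not integrable, the left-hand side is the junk value `0`.
lemma intervalIntegral_mono_of_nonneg_of_le_Ioo {f g : ℝ → ℝ} {a b : ℝ} {μ : Measure ℝ}
    [NullSingletonClass μ] (hab : a ≤ b) (hf : ∀ x ∈ Ioo a b, 0 ≤ f x)
    (hg : IntervalIntegrable g μ a b) (hfg : ∀ x ∈ Ioo a b, f x ≤ g x) :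
    ∫ x in a..b, f x ∂μ ≤ ∫ x in a..b, g x ∂μ := by
  simp only [intervalIntegral.integral_of_le hab, integral_Ioc_eq_integral_Ioo]
  exact integral_mono_of_nonneg (ae_restrict_of_forall_mem measurableSet_Ioo hf)
    ((intervalIntegrable_iff_integrableOn_Ioo_of_le hab).1 hg)
    (ae_restrict_of_forall_mem measurableSet_Ioo hfg)

lemma intervalIntegrable_abs_rpow {p : ℝ} (hp : -1 < p) (a b : ℝ) :
    IntervalIntegrable (fun x : ℝ ↦ |x| ^ p) volume a b := by
  refine intervalIntegrable_of_even (fun x ↦ by rw [abs_neg]) fun x hx ↦ ?_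
  refine (intervalIntegral.intervalIntegrable_rpow' hp).congr fun y hy ↦ ?_
  rw [uIoc_of_le hx.le] at hy
  simp only [abs_of_pos hy.1]

lemma intervalIntegrable_abs_sub_rpow_mul_rpow {p q : ℝ} (hp : -1 < p) (hq : 0 ≤ q)
    (t a b : ℝ) : IntervalIntegrable (fun s : ℝ ↦ |t - s| ^ p * s ^ q) volume a b := by
  have h_kernel : IntervalIntegrable (fun s : ℝ ↦ |t - s| ^ p) volume a b := by
    simpa only [sub_sub_cancel] using
      (intervalIntegrable_abs_rpow hp (t - a) (t - b)).comp_sub_left t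
  exact h_kernel.mul_continuousOn (Real.continuous_rpow_const hq).continuousOn

lemma integral_zero_self_abs_sub_rpow_mul_rpow (p q : ℝ) {t : ℝ} (ht : 0 < t) :
    ∫ s in (0 : ℝ)..t, |t - s| ^ p * s ^ q = t ^ (p + q + 1) * betaB (p + 1) (q + 1) := by
  have h_subst : t * ∫ u in (0 : ℝ)..1, |t - (t - t * u)| ^ p * (t - t * u) ^ q =
      ∫ s in (0 : ℝ)..t, |t - s| ^ p * s ^ q := by
    simpa only [mul_zero, mul_one, sub_zero, sub_self] using
      intervalIntegral.mul_integral_comp_sub_mul (a := 0) (b := 1)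
        (f := fun s : ℝ ↦ |t - s| ^ p * s ^ q) t t
  have h_scale : ∀ u ∈ uIcc (0 : ℝ) 1,
      |t - (t - t * u)| ^ p * (t - t * u) ^ q = t ^ (p + q) * (u ^ p * (1 - u) ^ q) := by
    intro u hu
    rw [uIcc_of_le zero_le_one] at hu
    rw [sub_sub_cancel, abs_of_nonneg (mul_nonneg ht.le hu.1),
      show t - t * u = t * (1 - u) by ring, Real.mul_rpow ht.le hu.1,
      Real.mul_rpow ht.le (sub_nonneg.2 hu.2), Real.rpow_add ht]
    ring
  rw [← h_subst, intervalIntegral.integral_congr h_scale, intervalIntegral.integral_const_mul,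
    betaB_add_one_add_one, Real.rpow_add_one ht.ne']
  ring

lemma integral_sub_left_rpow {p : ℝ} (hp : -1 < p) (t b : ℝ) :
    ∫ s in t..b, (s - t) ^ p = (b - t) ^ (p + 1) / (p + 1) := by
  rw [intervalIntegral.integral_comp_sub_right (fun x : ℝ ↦ x ^ p), sub_self,
    integral_rpow (Or.inl hp), Real.zero_rpow (by linarith), sub_zero]

lemma integral_abs_sub_rpow_mul_rpow_le_of_le {p q t b : ℝ} (hp : -1 < p) (hq : 0 ≤ q)
    (ht : 0 ≤ t) (htb : t ≤ b) :
    ∫ s in t..b, |t - s| ^ p * s ^ q ≤ (b - t) ^ (p + 1) / (p + 1) * b ^ q := by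
  have h_int : IntervalIntegrable (fun s : ℝ ↦ (s - t) ^ p * b ^ q) volume t b := by
    have h := (intervalIntegral.intervalIntegrable_rpow' hp (a := 0) (b := b - t)).comp_sub_right t
    simp only [zero_add, sub_add_cancel] at h
    exact h.mul_const _
  have h_le : ∀ s ∈ Icc t b, |t - s| ^ p * s ^ q ≤ (s - t) ^ p * b ^ q := by
    intro s hs
    rw [abs_sub_comm, abs_of_nonneg (sub_nonneg.2 hs.1)]
    exact mul_le_mul_of_nonneg_left (Real.rpow_le_rpow (ht.trans hs.1) hs.2 hq)
      (Real.rpow_nonneg (sub_nonneg.2 hs.1) _)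
  calc ∫ s in t..b, |t - s| ^ p * s ^ q
      ≤ ∫ s in t..b, (s - t) ^ p * b ^ q :=
        intervalIntegral.integral_mono_on htb
          (intervalIntegrable_abs_sub_rpow_mul_rpow hp hq t t b) h_int h_le
    _ = (b - t) ^ (p + 1) / (p + 1) * b ^ q := by
        rw [intervalIntegral.integral_mul_const, integral_sub_left_rpow hp]

lemma integral_zero_abs_sub_rpow_mul_rpow_le {p q t b : ℝ} (hp : -1 < p) (hq : 0 ≤ q)
    (ht : 0 < t) (htb : t ≤ b) :
    ∫ s in (0 : ℝ)..b, |t - s| ^ p * s ^ q ≤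
      t ^ (p + q + 1) * betaB (p + 1) (q + 1) + (b - t) ^ (p + 1) / (p + 1) * b ^ q := by
  have h_int := intervalIntegrable_abs_sub_rpow_mul_rpow hp hq t
  rw [← intervalIntegral.integral_add_adjacent_intervals (h_int 0 t) (h_int t b),
    integral_zero_self_abs_sub_rpow_mul_rpow p q ht]
  gcongr
  exact integral_abs_sub_rpow_mul_rpow_le_of_le hp hq ht.le htb

lemma rpow_mul_one_sub_rpow_mul_integral_le {β ν t : ℝ} (α μ : ℝ) (hβ : -1 < β) (hν : 0 ≤ ν)
    (ht : t ∈ Ioo (0 : ℝ) 1) :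
    t ^ μ * (1 - t) ^ α * ∫ s in (0 : ℝ)..1, |t - s| ^ β * s ^ ν ≤
      t ^ (μ + ν + β + 1) * (1 - t) ^ α * betaB (β + 1) (ν + 1) +
        1 / (β + 1) * (t ^ μ * (1 - t) ^ (α + β + 1)) := by
  obtain ⟨ht₀, ht₁⟩ := ht
  have ht' : 0 < 1 - t := sub_pos.2 ht₁
  calc t ^ μ * (1 - t) ^ α * ∫ s in (0 : ℝ)..1, |t - s| ^ β * s ^ ν
      ≤ t ^ μ * (1 - t) ^ α * (t ^ (β + ν + 1) * betaB (β + 1) (ν + 1) +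
          (1 - t) ^ (β + 1) / (β + 1) * 1 ^ ν) := by
        gcongr
        exact integral_zero_abs_sub_rpow_mul_rpow_le hβ hν ht₀ ht₁.le
    _ = _ := by
        rw [show μ + ν + β + 1 = μ + (β + ν + 1) by ring, add_assoc α, Real.rpow_add ht₀ μ,
          Real.rpow_add ht' α, Real.one_rpow]
        ring

/-- Lemma 4 (i): for `α, β, μ ∈ (−1,∞)` and `ν ∈ [0,∞)`,
`∫₀¹∫₀¹ t^μ (1−t)^α |t−s|^β s^ν ds dt ≤ B(μ+ν+β+2, α+1)·B(β+1, ν+1) + B(μ+1, α+β+2)/(β+1)`. -/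
theorem stmt0 (α β μ ν : ℝ) (hα : -1 < α) (hβ : -1 < β) (hμ : -1 < μ) (hν : 0 ≤ ν) :
    (∫ t in (0:ℝ)..1, ∫ s in (0:ℝ)..1, t ^ μ * (1 - t) ^ α * |t - s| ^ β * s ^ ν)
      ≤ betaB (μ + ν + β + 2) (α + 1) * betaB (β + 1) (ν + 1)
        + (1 / (β + 1)) * betaB (μ + 1) (α + β + 2) := by
  have h_left := (intervalIntegrable_rpow_mul_one_sub_rpow (a := μ + ν + β + 1) (by linarith)
    hα).mul_const (betaB (β + 1) (ν + 1))
  have h_right := (intervalIntegrable_rpow_mul_one_sub_rpow (b := α + β + 1) hμ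
    (by linarith)).const_mul (1 / (β + 1))
  simp only [mul_assoc (_ * _) (|_| ^ β), intervalIntegral.integral_const_mul]
  rw [show μ + ν + β + 2 = μ + ν + β + 1 + 1 by ring, show α + β + 2 = α + β + 1 + 1 by ring,
    betaB_add_one_add_one (μ + ν + β + 1), betaB_add_one_add_one μ,
    ← intervalIntegral.integral_mul_const, ← intervalIntegral.integral_const_mul,
    ← intervalIntegral.integral_add h_left h_right]
  refine intervalIntegral_mono_of_nonneg_of_le_Ioo zero_le_one (fun t ht ↦ ?_)
    (h_left.add h_right) fun t ht ↦ rpow_mul_one_sub_rpow_mul_integral_le α μ hβ hν ht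
  have h_inner : 0 ≤ ∫ s in (0 : ℝ)..1, |t - s| ^ β * s ^ ν :=
    intervalIntegral.integral_nonneg zero_le_one fun s hs ↦
      mul_nonneg (by positivity) (Real.rpow_nonneg hs.1 ν)
  exact mul_nonneg (mul_nonneg (Real.rpow_nonneg ht.1.le μ)
    (Real.rpow_nonneg (sub_nonneg.2 ht.2.le) α)) h_inner
end

section
/- Fix α, β ∈ (−1, ∞) and define B(α,β,μ,ν) = B(μ+ν+β+2, α+1)·B(β+1, ν+1) + (1/(β+1))·B(μ+1, α+β+2) for μ ∈ (−1,∞), ν ∈ [0,∞). Then, as μ → ∞ and ν → ∞ jointly (along the product filter atTop × atTop), the ratio B(α,β,μ,ν) / [Γ(α+1)Γ(β+1)/((μ+ν)^{α+1} ν^{β+1}) + Γ(α+β+2)/((β+1) μ^{α+β+2})] converges to 1. -/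
open Filter

/-- The bound `B(α,β,μ,ν)` of Lemma 4. -/
noncomputable def Bfun (α β μ ν : ℝ) : ℝ :=
  betaB (μ + ν + β + 2) (α + 1) * betaB (β + 1) (ν + 1)
    + (1 / (β + 1)) * betaB (μ + 1) (α + β + 2)

/-!
Log-convexity of `Γ` gives Wendel's inequality `Γ(x + a) ≤ Γ(x) x ^ a` for `0 ≤ a ≤ 1`; applied at
`x + a` with increment `1 - a` it also yields the matching lower bound, so `Γ(x + a) ∼ Γ(x) x ^ a`
for these `a`. Since `Γ(x + a + 1) = (x + a) Γ(x + a)` and `x + a ∼ x`, the validity of this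
equivalence is `1`-periodic in `a`, hence it holds for every real `a`. Writing the Beta function as
a Gamma quotient, `B(x + c, a) ∼ Γ(a) / x ^ a`. Finally, equivalences of eventually nonnegative
functions can be added, because no cancellation occurs in the sum.
-/

open Asymptotics Topology

theorem Gamma_add_le_Gamma_mul_rpow {x a : ℝ} (hx : 0 < x) (ha₀ : 0 ≤ a) (ha₁ : a ≤ 1) :
    Real.Gamma (x + a) ≤ Real.Gamma x * x ^ a := by
  rcases ha₀.eq_or_lt with rfl | ha₀
  · simp
  rcases ha₁.eq_or_lt with rfl | ha₁
  · rw [Real.Gamma_add_one hx.ne', Real.rpow_one, mul_comm]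
  have hΓ : 0 < Real.Gamma x := Real.Gamma_pos_of_pos hx
  calc Real.Gamma (x + a) = Real.Gamma ((1 - a) * x + a * (x + 1)) := by ring_nf
    _ ≤ Real.Gamma x ^ (1 - a) * Real.Gamma (x + 1) ^ a :=
      Real.Gamma_mul_add_mul_le_rpow_Gamma_mul_rpow_Gamma hx (by linarith) (sub_pos.2 ha₁) ha₀
        (by ring)
    _ = Real.Gamma x ^ (1 - a) * Real.Gamma x ^ a * x ^ a := by
      rw [Real.Gamma_add_one hx.ne', Real.mul_rpow hx.le hΓ.le]
      ring
    _ = Real.Gamma x * x ^ a := by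
      rw [← Real.rpow_add hΓ, sub_add_cancel, Real.rpow_one]

theorem Gamma_mul_rpow_mul_rpow_le_Gamma_add {x a : ℝ} (hx : 0 < x) (ha₀ : 0 ≤ a) (ha₁ : a ≤ 1) :
    (x / (x + a)) ^ (1 - a) * (Real.Gamma x * x ^ a) ≤ Real.Gamma (x + a) := by
  have hxa : 0 < x + a := by linarith
  have hpow : 0 < (x + a) ^ (1 - a) := Real.rpow_pos_of_pos hxa _
  have hΓ_le : x * Real.Gamma x ≤ Real.Gamma (x + a) * (x + a) ^ (1 - a) := by
    rw [← Real.Gamma_add_one hx.ne']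
    simpa only [add_add_sub_cancel] using
      Gamma_add_le_Gamma_mul_rpow hxa (sub_nonneg.2 ha₁) (sub_le_self 1 ha₀)
  calc (x / (x + a)) ^ (1 - a) * (Real.Gamma x * x ^ a)
      = x ^ (1 - a) * x ^ a * Real.Gamma x / (x + a) ^ (1 - a) := by
        rw [Real.div_rpow hx.le hxa.le]
        ring
    _ = x * Real.Gamma x / (x + a) ^ (1 - a) := by
        rw [← Real.rpow_add hx, sub_add_cancel, Real.rpow_one]
    _ ≤ Real.Gamma (x + a) := (div_le_iff₀ hpow).2 hΓ_le

theorem add_const_isEquivalent_atTop (a : ℝ) : (fun x : ℝ => x + a) ~[atTop] fun x => x :=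
  IsEquivalent.refl.add_const_of_norm_tendsto_atTop tendsto_norm_atTop_atTop

theorem eventually_Gamma_mul_rpow_pos (a : ℝ) :
    ∀ᶠ x : ℝ in atTop, 0 < Real.Gamma x * x ^ a := by
  filter_upwards [eventually_gt_atTop 0] with x hx
  positivity

theorem Gamma_add_isEquivalent_Gamma_mul_rpow_of_mem_Icc {a : ℝ} (ha : a ∈ Set.Icc 0 1) :
    (fun x : ℝ => Real.Gamma (x + a)) ~[atTop] fun x => Real.Gamma x * x ^ a := by
  have hquot : Tendsto (fun x : ℝ => x / (x + a)) atTop (𝓝 1) :=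
    (isEquivalent_iff_tendsto_one
      ((eventually_gt_atTop (-a)).mono fun x hx => by linarith)).1
      (add_const_isEquivalent_atTop a).symm
  have hlower : Tendsto (fun x : ℝ => (x / (x + a)) ^ (1 - a)) atTop (𝓝 1) := by
    simpa only [Real.one_rpow] using hquot.rpow_const (p := 1 - a) (Or.inl one_ne_zero)
  refine isEquivalent_of_tendsto_one
    (tendsto_of_tendsto_of_tendsto_of_le_of_le' hlower tendsto_const_nhds ?_ ?_)
  · filter_upwards [eventually_gt_atTop 0, eventually_Gamma_mul_rpow_pos a] with x hx hpos
    exact (le_div_iff₀ hpos).2 (Gamma_mul_rpow_mul_rpow_le_Gamma_add hx ha.1 ha.2)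
  · filter_upwards [eventually_gt_atTop 0, eventually_Gamma_mul_rpow_pos a] with x hx hpos
    exact (div_le_one hpos).2 (Gamma_add_le_Gamma_mul_rpow hx ha.1 ha.2)

theorem Gamma_add_add_one_isEquivalent_Gamma_mul_rpow_iff (a : ℝ) :
    ((fun x : ℝ => Real.Gamma (x + (a + 1))) ~[atTop] fun x => Real.Gamma x * x ^ (a + 1)) ↔
      (fun x : ℝ => Real.Gamma (x + a)) ~[atTop] fun x => Real.Gamma x * x ^ a := by
  have hleft : (fun x : ℝ => Real.Gamma (x + (a + 1))) =ᶠ[atTop]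
      fun x => Real.Gamma (x + a) * (x + a) := by
    filter_upwards [eventually_gt_atTop (-a)] with x hx
    rw [← add_assoc, Real.Gamma_add_one (by linarith), mul_comm]
  have hright : (fun x : ℝ => Real.Gamma x * x ^ (a + 1)) =ᶠ[atTop]
      fun x => Real.Gamma x * x ^ a * x := by
    filter_upwards [eventually_gt_atTop 0] with x hx
    rw [Real.rpow_add_one hx.ne', mul_assoc]
  have hshift := add_const_isEquivalent_atTop a
  constructor
  · intro h
    refine (((h.congr_left hleft).congr_right hright).div hshift).congr_left ?_ |>.congr_right ?_
    · filter_upwards [eventually_gt_atTop (-a)] with x hx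
      exact mul_div_cancel_right₀ _ (by linarith)
    · filter_upwards [eventually_gt_atTop 0] with x hx
      exact mul_div_cancel_right₀ _ hx.ne'
  · intro h
    exact ((h.mul hshift).congr_left hleft.symm).congr_right hright.symm

theorem Gamma_add_isEquivalent_Gamma_mul_rpow (a : ℝ) :
    (fun x : ℝ => Real.Gamma (x + a)) ~[atTop] fun x => Real.Gamma x * x ^ a := by
  have hperiodic : Function.Periodic (fun b : ℝ =>
      (fun x : ℝ => Real.Gamma (x + b)) ~[atTop] fun x => Real.Gamma x * x ^ b) 1 :=
    fun b => propext (Gamma_add_add_one_isEquivalent_Gamma_mul_rpow_iff b)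
  obtain ⟨b, hb, hab⟩ := hperiodic.exists_mem_Ico₀ one_pos a
  exact hab.mpr (Gamma_add_isEquivalent_Gamma_mul_rpow_of_mem_Icc (Set.Ico_subset_Icc_self hb))

theorem ofReal_betaB (x y : ℝ) : (betaB x y : ℂ) = Complex.betaIntegral x y := by
  rw [betaB, Complex.betaIntegral, ← intervalIntegral.integral_ofReal]
  refine intervalIntegral.integral_congr fun u hu => ?_
  rw [Set.uIcc_of_le zero_le_one] at hu
  push_cast [Complex.ofReal_cpow hu.1, Complex.ofReal_cpow (sub_nonneg.2 hu.2)]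
  rfl

theorem betaB_comm (x y : ℝ) : betaB x y = betaB y x := by
  exact_mod_cast (ofReal_betaB x y).trans
    ((Complex.betaIntegral_symm y x).trans (ofReal_betaB y x).symm)

theorem betaB_eq_Gamma_mul_div {x y : ℝ} (hx : 0 < x) (hy : 0 < y) :
    betaB x y = Real.Gamma x * Real.Gamma y / Real.Gamma (x + y) := by
  have h := ProbabilityTheory.beta_eq_betaIntegralReal x y hx hy
  rwa [← ofReal_betaB, Complex.ofReal_re, eq_comm] at h

theorem betaB_add_const_isEquivalent_Gamma_div_rpow {a : ℝ} (ha : 0 < a) (c : ℝ) :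
    (fun x : ℝ => betaB (x + c) a) ~[atTop] fun x => Real.Gamma a / x ^ a := by
  have hquot : (fun x : ℝ => Real.Gamma (x + c) * Real.Gamma a / Real.Gamma (x + (c + a)))
      ~[atTop] fun x => Real.Gamma x * x ^ c * Real.Gamma a / (Real.Gamma x * x ^ (c + a)) :=
    ((Gamma_add_isEquivalent_Gamma_mul_rpow c).mul .refl).div
      (Gamma_add_isEquivalent_Gamma_mul_rpow (c + a))
  refine (hquot.congr_left ?_).congr_right ?_
  · filter_upwards [eventually_gt_atTop (-c)] with x hx
    rw [betaB_eq_Gamma_mul_div (by linarith) ha, add_assoc]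
  · filter_upwards [eventually_gt_atTop 0, eventually_Gamma_mul_rpow_pos c] with x hx hpos
    rw [Real.rpow_add hx, ← mul_assoc, mul_div_mul_left _ _ hpos.ne']

theorem isEquivalent_add_add_of_eventually_nonneg {ι : Type*} {l : Filter ι}
    {u v t w : ι → ℝ} (hv : ∀ᶠ i in l, 0 ≤ v i) (hw : ∀ᶠ i in l, 0 ≤ w i)
    (huv : u ~[l] v) (htw : t ~[l] w) : u + t ~[l] v + w := by
  have hv_abs : v =ᶠ[l] fun i => |v i| := hv.mono fun _ hi => (abs_of_nonneg hi).symm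
  have hw_abs : w =ᶠ[l] fun i => |w i| := hw.mono fun _ hi => (abs_of_nonneg hi).symm
  exact (IsEquivalent.add_add_of_nonneg (fun i => abs_nonneg (v i)) (fun i => abs_nonneg (w i))
    (huv.congr_right hv_abs) (htw.congr_right hw_abs)).congr_right (hv_abs.add hw_abs).symm

theorem betaB_mul_betaB_isEquivalent {a b : ℝ} (ha : 0 < a) (hb : 0 < b) (c d : ℝ) :
    (fun p : ℝ × ℝ => betaB (p.1 + p.2 + c) a * betaB b (p.2 + d)) ~[atTop ×ˢ atTop]
      fun p => Real.Gamma a * Real.Gamma b / ((p.1 + p.2) ^ a * p.2 ^ b) := by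
  have hsum : Tendsto (fun p : ℝ × ℝ => p.1 + p.2) (atTop ×ˢ atTop) atTop :=
    tendsto_fst.atTop_add_atTop tendsto_snd
  simp only [betaB_comm b, mul_div_mul_comm]
  exact ((betaB_add_const_isEquivalent_Gamma_div_rpow ha c).comp_tendsto hsum).mul
    ((betaB_add_const_isEquivalent_Gamma_div_rpow hb d).comp_tendsto tendsto_snd)

theorem one_div_mul_betaB_isEquivalent {a : ℝ} (ha : 0 < a) (b c : ℝ) :
    (fun x : ℝ => 1 / b * betaB (x + c) a) ~[atTop] fun x => Real.Gamma a / (b * x ^ a) := by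
  have h := (IsEquivalent.refl (u := fun _ : ℝ => 1 / b)).mul
    (betaB_add_const_isEquivalent_Gamma_div_rpow ha c)
  refine h.congr_right (.of_eq (funext fun x => ?_))
  rw [Pi.mul_apply, div_mul_div_comm, one_mul]

/-- Lemma 4 (ii): for fixed `α, β ∈ (−1,∞)`, as `μ, ν → ∞` jointly,
`B(α,β,μ,ν) ∼ Γ(α+1)Γ(β+1)/((μ+ν)^{α+1} ν^{β+1}) + Γ(α+β+2)/((β+1) μ^{α+β+2})`. -/
theorem stmt1 (α β : ℝ) (hα : -1 < α) (hβ : -1 < β) :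
    Tendsto
      (fun p : ℝ × ℝ =>
        Bfun α β p.1 p.2 /
          (Real.Gamma (α + 1) * Real.Gamma (β + 1) / ((p.1 + p.2) ^ (α + 1) * p.2 ^ (β + 1))
            + Real.Gamma (α + β + 2) / ((β + 1) * p.1 ^ (α + β + 2))))
      (atTop ×ˢ atTop) (nhds 1) := by
  have ha : 0 < α + 1 := by linarith
  have hb : 0 < β + 1 := by linarith
  have hab : 0 < α + β + 2 := by linarith
  have hpos : ∀ᶠ p : ℝ × ℝ in atTop ×ˢ atTop, 0 < p.1 ∧ 0 < p.2 :=
    (eventually_gt_atTop 0).prod_mk (eventually_gt_atTop 0)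
  have hfirst := betaB_mul_betaB_isEquivalent ha hb (β + 2) 1
  have hsecond : (fun p : ℝ × ℝ => 1 / (β + 1) * betaB (p.1 + 1) (α + β + 2)) ~[atTop ×ˢ atTop]
      fun p => Real.Gamma (α + β + 2) / ((β + 1) * p.1 ^ (α + β + 2)) :=
    (one_div_mul_betaB_isEquivalent hab (β + 1) 1).comp_tendsto tendsto_fst
  have hBfun := (isEquivalent_add_add_of_eventually_nonneg
    (hpos.mono fun p ⟨h₁, h₂⟩ => by positivity) (hpos.mono fun p ⟨h₁, _⟩ => by positivity)
    hfirst hsecond).congr_left (w := fun p => Bfun α β p.1 p.2) <|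
      .of_eq (funext fun p => by simp only [Bfun, Pi.add_apply, add_assoc])
  exact (isEquivalent_iff_tendsto_one (hpos.mono fun p ⟨h₁, h₂⟩ => by positivity)).1 hBfun
end

section
/- Let H ∈ (0,1) and let n ≥ 1 be an integer. Then 1 − 2n ∫₀¹ t^{n−1} R_H(t,1) dt + n² ∫₀¹ ∫₀¹ t^{n−1} s^{n−1} R_H(t,s) ds dt = ((n² + 2nH)/(2n + 2H)) · (Γ(2H+1)Γ(n)/Γ(n+2H+1)). -/
/-- The covariance function of fractional Brownian motion with Hurst parameter `H`:
`R_H(t,s) = (1/2)(t^{2H} + s^{2H} − |t−s|^{2H})`. -/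
noncomputable def fbmCov (H t s : ℝ) : ℝ :=
  (1/2) * (t ^ (2 * H) + s ^ (2 * H) - |t - s| ^ (2 * H))

/-!
With `∫₀ᵗ s^(p-1) (t-s)^(q-1) ds = t^(p+q-1) B(p, q)`, integrating over the triangle `s < t` and
doubling by symmetry gives `∫₀¹∫₀¹ (ts)^(p-1) |t-s|^(2H) ds dt = 2 B(p, 2H+1) / (2p+2H)`. The
other terms of the covariance are products of powers. Writing `B = B(p, 2H+1)`, the three summands
of the norm add up to `p B - p² B / (2p+2H) = p (p+2H) / (2p+2H) B`: all terms free of `B` cancel.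
-/

open MeasureTheory Set
open ProbabilityTheory (beta beta_pos)

section RegionBetween

variable {α E : Type*} {f g : α → ℝ} {s : Set α}

theorem indicator_regionBetween_apply [Zero E] (F : α × ℝ → E) (x : α) (y : ℝ) :
    (regionBetween f g s).indicator F (x, y) =
      s.indicator (fun x' ↦ (Ioo (f x') (g x')).indicator (fun y' ↦ F (x', y')) y) x := by
  classical
  simp only [indicator_apply, regionBetween, mem_ofPred_eq, ite_and]

variable [MeasurableSpace α] [NormedAddCommGroup E] {μ : Measure α}

theorem integrableOn_regionBetween (hf : Measurable f) (hg : Measurable g) (hs : MeasurableSet s)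
    {F : α × ℝ → E} (hF : AEStronglyMeasurable F (μ.prod volume))
    (hslice : ∀ x ∈ s, IntegrableOn (fun y ↦ F (x, y)) (Ioo (f x) (g x)))
    (hnorm : IntegrableOn (fun x ↦ ∫ y in Ioo (f x) (g x), ‖F (x, y)‖) s μ) :
    IntegrableOn F (regionBetween f g s) (μ.prod volume) := by
  have hD := measurableSet_regionBetween hf hg hs
  rw [← integrable_indicator_iff hD, integrable_prod_iff (hF.indicator hD)]
  simp only [indicator_regionBetween_apply]
  constructor
  · refine .of_forall fun x ↦ ?_
    by_cases hx : x ∈ s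
    · simpa only [indicator_of_mem hx] using
        (integrable_indicator_iff measurableSet_Ioo).2 (hslice x hx)
    · simp [indicator_of_notMem hx]
  · rw [← integrable_indicator_iff hs] at hnorm
    refine hnorm.congr (.of_forall fun x ↦ ?_)
    by_cases hx : x ∈ s
    · simp only [indicator_of_mem hx, norm_indicator_eq_indicator_norm,
        integral_indicator measurableSet_Ioo]
    · simp only [indicator_of_notMem hx, norm_zero, integral_zero]

theorem setIntegral_regionBetween [SFinite μ] [NormedSpace ℝ E] (hf : Measurable f)
    (hg : Measurable g) (hs : MeasurableSet s) {F : α × ℝ → E}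
    (hF : IntegrableOn F (regionBetween f g s) (μ.prod volume)) :
    ∫ z in regionBetween f g s, F z ∂(μ.prod volume) =
      ∫ x in s, (∫ y in Ioo (f x) (g x), F (x, y)) ∂μ := by
  have hD := measurableSet_regionBetween hf hg hs
  rw [← integral_indicator hD, integral_prod _ ((integrable_indicator_iff hD).2 hF),
    ← integral_indicator hs]
  simp only [indicator_regionBetween_apply]
  congr 1 with x
  by_cases hx : x ∈ s
  · simp only [indicator_of_mem hx, integral_indicator measurableSet_Ioo]
  · simp only [indicator_of_notMem hx, integral_zero]

end RegionBetween

section Swap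

variable {α E : Type*} [MeasurableSpace α] {μ ν : Measure α} [SFinite ν]

theorem ae_prod_fst_ne_snd [MeasurableEq α] [NullSingletonClass ν] :
    ∀ᵐ z ∂(μ.prod ν), z.1 ≠ z.2 := by
  rw [Measure.ae_prod_iff_ae_ae (p := fun z : α × α ↦ z.1 ≠ z.2) measurableSet_diagonal.compl]
  exact .of_forall fun x ↦ (Measure.ae_ne ν x).mono fun _ h ↦ h.symm

variable [NormedAddCommGroup E] {f : α × α → E}

theorem integrableOn_swap_preimage_of_symm (hf : ∀ z, f z.swap = f z) {D : Set (α × α)}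
    (hint : IntegrableOn f D (ν.prod ν)) : IntegrableOn f (Prod.swap ⁻¹' D) (ν.prod ν) :=
  ((Measure.measurePreserving_swap.integrableOn_comp_preimage
    MeasurableEquiv.prodComm.measurableEmbedding).2 hint).congr (.of_forall hf)

theorem setIntegral_swap_preimage_of_symm [NormedSpace ℝ E] (hf : ∀ z, f z.swap = f z)
    (D : Set (α × α)) :
    ∫ z in Prod.swap ⁻¹' D, f z ∂(ν.prod ν) = ∫ z in D, f z ∂(ν.prod ν) := by
  simpa only [hf] using Measure.measurePreserving_swap.setIntegral_preimage_emb
    MeasurableEquiv.prodComm.measurableEmbedding f D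

end Swap

/-- The half `{(t, s) | a < s < t ≤ b}` of the square `(a, b]²` below the diagonal, encoded as a
`regionBetween` so that integrals over it can be computed as iterated integrals. -/
def lowerTriangle (a b : ℝ) : Set (ℝ × ℝ) :=
  regionBetween (fun _ ↦ a) id (Ioc a b)

section Symmetric

variable {E : Type*} [NormedAddCommGroup E] {a b : ℝ} {f : ℝ × ℝ → E}

theorem measurableSet_lowerTriangle : MeasurableSet (lowerTriangle a b) :=
  measurableSet_regionBetween measurable_const measurable_id measurableSet_Ioc

theorem disjoint_lowerTriangle_swap :
    Disjoint (lowerTriangle a b) (Prod.swap ⁻¹' lowerTriangle a b) :=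
  disjoint_left.2 fun _ h h' ↦ lt_asymm h.2.2 h'.2.2

theorem Ioc_prod_Ioc_ae_eq_lowerTriangle_union_swap :
    (Ioc a b ×ˢ Ioc a b : Set (ℝ × ℝ)) =ᵐ[volume]
      (lowerTriangle a b ∪ Prod.swap ⁻¹' lowerTriangle a b : Set (ℝ × ℝ)) := by
  filter_upwards [ae_prod_fst_ne_snd] with ⟨t, s⟩ (hne : t ≠ s)
  refine propext ⟨fun ⟨ht, hs⟩ ↦ ?_, ?_⟩
  · exact hne.lt_or_gt.symm.imp (fun h ↦ ⟨ht, hs.1, h⟩) (fun h ↦ ⟨hs, ht.1, h⟩)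
  · rintro (⟨ht, hs, h⟩ | ⟨hs, ht, h⟩)
    exacts [⟨ht, hs, (le_of_lt h).trans ht.2⟩, ⟨⟨ht, (le_of_lt h).trans hs.2⟩, hs⟩]

theorem integrableOn_Ioc_prod_Ioc_of_symm (hf : ∀ z, f z.swap = f z)
    (hint : IntegrableOn f (lowerTriangle a b)) : IntegrableOn f (Ioc a b ×ˢ Ioc a b) := by
  rw [integrableOn_congr_set_ae Ioc_prod_Ioc_ae_eq_lowerTriangle_union_swap]
  exact hint.union (integrableOn_swap_preimage_of_symm hf hint)

theorem setIntegral_Ioc_prod_Ioc_of_symm [NormedSpace ℝ E] (hf : ∀ z, f z.swap = f z)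
    (hint : IntegrableOn f (lowerTriangle a b)) :
    ∫ z in Ioc a b ×ˢ Ioc a b, f z = (2 : ℝ) • ∫ z in lowerTriangle a b, f z := by
  rw [setIntegral_congr_set Ioc_prod_Ioc_ae_eq_lowerTriangle_union_swap,
    setIntegral_union disjoint_lowerTriangle_swap (measurable_swap measurableSet_lowerTriangle)
      hint (integrableOn_swap_preimage_of_symm hf hint),
    Measure.volume_eq_prod, setIntegral_swap_preimage_of_symm hf, two_smul]

end Symmetric

section Beta

variable {p q r t : ℝ}

theorem integral_rpow_mul_sub_rpow (hp : 0 < p) (hq : 0 < q) (ht : 0 < t) :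
    ∫ s in (0 : ℝ)..t, s ^ (p - 1) * (t - s) ^ (q - 1) = t ^ (p + q - 1) * beta p q := by
  have hscaled := Complex.betaIntegral_scaled p q ht
  rw [Complex.betaIntegral_eq_Gamma_mul_div _ _ (by simpa) (by simpa)] at hscaled
  have hcast : ∀ s ∈ uIcc 0 t, (s : ℂ) ^ ((p : ℂ) - 1) * ((t : ℂ) - s) ^ ((q : ℂ) - 1) =
      ((s ^ (p - 1) * (t - s) ^ (q - 1) : ℝ) : ℂ) := by
    intro s hs
    rw [uIcc_of_le ht.le] at hs
    push_cast [Complex.ofReal_cpow hs.1, Complex.ofReal_cpow (sub_nonneg.2 hs.2)]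
    rfl
  rw [intervalIntegral.integral_congr hcast, intervalIntegral.integral_ofReal] at hscaled
  apply Complex.ofReal_injective
  rw [hscaled, beta]
  push_cast [Complex.ofReal_cpow ht.le, ← Complex.Gamma_ofReal]
  rfl

theorem intervalIntegrable_rpow_mul_sub_rpow (hp : 0 < p) (hq : 0 < q) (ht : 0 < t) :
    IntervalIntegrable (fun s ↦ s ^ (p - 1) * (t - s) ^ (q - 1)) volume 0 t := by
  apply intervalIntegral.intervalIntegrable_of_integral_ne_zero
  rw [integral_rpow_mul_sub_rpow hp hq ht]
  exact (mul_pos (Real.rpow_pos_of_pos ht _) (beta_pos hp hq)).ne'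

theorem integral_rpow_sub_one (hp : 0 < p) : ∫ t in (0 : ℝ)..1, t ^ (p - 1) = 1 / p := by
  rw [integral_rpow (.inl (by linarith)), sub_add_cancel, Real.one_rpow, Real.zero_rpow hp.ne',
    sub_zero]

theorem intervalIntegrable_rpow_sub_one (hp : 0 < p) :
    IntervalIntegrable (fun t : ℝ ↦ t ^ (p - 1)) volume 0 1 :=
  intervalIntegral.intervalIntegrable_rpow' (by linarith)

theorem integrableOn_Ioc_prod_Ioc_rpow_mul_rpow (hp : 0 < p) (hq : 0 < q) :
    IntegrableOn (fun z : ℝ × ℝ ↦ z.1 ^ (p - 1) * z.2 ^ (q - 1)) (Ioc 0 1 ×ˢ Ioc 0 1) := by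
  rw [IntegrableOn, Measure.volume_eq_prod, ← Measure.prod_restrict]
  exact (intervalIntegrable_rpow_sub_one hp).1.mul_prod (intervalIntegrable_rpow_sub_one hq).1

theorem setIntegral_Ioc_prod_Ioc_rpow_mul_rpow (hp : 0 < p) (hq : 0 < q) :
    ∫ z in Ioc (0 : ℝ) 1 ×ˢ Ioc (0 : ℝ) 1, z.1 ^ (p - 1) * z.2 ^ (q - 1) = 1 / (p * q) := by
  rw [Measure.volume_eq_prod, setIntegral_prod_mul (· ^ (p - 1)) (· ^ (q - 1)),
    ← intervalIntegral.integral_of_le zero_le_one, ← intervalIntegral.integral_of_le zero_le_one,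
    integral_rpow_sub_one hp, integral_rpow_sub_one hq, one_div_mul_one_div]

theorem setIntegral_Ioo_rpow_mul_sub_rpow (r : ℝ) (hp : 0 < p) (hq : 0 < q) (ht : 0 < t) :
    ∫ s in Ioo 0 t, t ^ (r - 1) * (s ^ (p - 1) * (t - s) ^ (q - 1)) =
      beta p q * t ^ (r + p + q - 1 - 1) := by
  rw [integral_const_mul, ← integral_Ioc_eq_integral_Ioo, ← intervalIntegral.integral_of_le ht.le,
    integral_rpow_mul_sub_rpow hp hq ht, ← mul_assoc, ← Real.rpow_add ht, mul_comm]
  ring_nf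

theorem integrableOn_lowerTriangle_rpow (hp : 0 < p) (hq : 0 < q) (hr : 0 < r + p + q - 1) :
    IntegrableOn (fun z : ℝ × ℝ ↦ z.1 ^ (r - 1) * (z.2 ^ (p - 1) * (z.1 - z.2) ^ (q - 1)))
      (lowerTriangle 0 1) := by
  refine integrableOn_regionBetween measurable_const measurable_id measurableSet_Ioc
    (Measurable.aestronglyMeasurable (by fun_prop)) (fun t ht ↦ ?_) ?_
  · exact ((intervalIntegrable_iff_integrableOn_Ioo_of_le ht.1.le).1
      (intervalIntegrable_rpow_mul_sub_rpow hp hq ht.1)).const_mul (t ^ (r - 1))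
  · have hpow : IntegrableOn (fun t : ℝ ↦ beta p q * t ^ (r + p + q - 1 - 1)) (Ioc 0 1) :=
      ((intervalIntegrable_iff_integrableOn_Ioc_of_le zero_le_one).1
        (intervalIntegrable_rpow_sub_one hr)).const_mul _
    refine hpow.congr_fun (fun t ht ↦ ?_) measurableSet_Ioc
    dsimp only [id]
    rw [← setIntegral_Ioo_rpow_mul_sub_rpow r hp hq ht.1]
    refine setIntegral_congr_fun measurableSet_Ioo fun s hs ↦ (Real.norm_of_nonneg ?_).symm
    have hs₀ : 0 ≤ s := hs.1.le
    have ht₀ : 0 ≤ t := ht.1.le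
    have hts : 0 ≤ t - s := sub_nonneg.2 hs.2.le
    positivity

theorem setIntegral_lowerTriangle_rpow (hp : 0 < p) (hq : 0 < q) (hr : 0 < r + p + q - 1) :
    ∫ z in lowerTriangle 0 1, z.1 ^ (r - 1) * (z.2 ^ (p - 1) * (z.1 - z.2) ^ (q - 1)) =
      beta p q / (r + p + q - 1) :=
  calc
    _ = ∫ t in Ioc (0 : ℝ) 1, ∫ s in Ioo 0 t, t ^ (r - 1) * (s ^ (p - 1) * (t - s) ^ (q - 1)) :=
      setIntegral_regionBetween measurable_const measurable_id measurableSet_Ioc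
        (integrableOn_lowerTriangle_rpow hp hq hr)
    _ = ∫ t in Ioc (0 : ℝ) 1, beta p q * t ^ (r + p + q - 1 - 1) :=
      setIntegral_congr_fun measurableSet_Ioc fun t ht ↦
        setIntegral_Ioo_rpow_mul_sub_rpow r hp hq ht.1
    _ = beta p q / (r + p + q - 1) := by
      rw [integral_const_mul, ← intervalIntegral.integral_of_le zero_le_one,
        integral_rpow_sub_one hr, mul_one_div]

end Beta

/-- The Riesz kernel `|t - s| ^ (q - 1)` weighted by `(t s) ^ (p - 1)`: for `q = 2H + 1` this is the
part of the weighted covariance that depends on the increment `t - s`. -/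
noncomputable def weightedRieszKernel (p q : ℝ) (z : ℝ × ℝ) : ℝ :=
  z.1 ^ (p - 1) * z.2 ^ (p - 1) * |z.1 - z.2| ^ (q - 1)

namespace weightedRieszKernel

variable {p q : ℝ}

theorem apply_swap (p q : ℝ) (z : ℝ × ℝ) :
    weightedRieszKernel p q z.swap = weightedRieszKernel p q z := by
  simp only [weightedRieszKernel, Prod.fst_swap, Prod.snd_swap, abs_sub_comm z.2,
    mul_comm (z.2 ^ (p - 1))]

theorem eqOn_lowerTriangle (p q a b : ℝ) :
    EqOn (weightedRieszKernel p q)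
      (fun z ↦ z.1 ^ (p - 1) * (z.2 ^ (p - 1) * (z.1 - z.2) ^ (q - 1))) (lowerTriangle a b) := by
  rintro ⟨t, s⟩ ⟨-, -, hst : s < t⟩
  simp only [weightedRieszKernel, abs_of_pos (sub_pos.2 hst), mul_assoc]

theorem integrableOn_lowerTriangle (hp : 0 < p) (hq : 0 < q) (hpq : 0 < p + p + q - 1) :
    IntegrableOn (weightedRieszKernel p q) (lowerTriangle 0 1) :=
  (integrableOn_lowerTriangle_rpow hp hq hpq).congr_fun (eqOn_lowerTriangle p q 0 1).symm
    measurableSet_lowerTriangle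

theorem integrableOn_Ioc_prod_Ioc (hp : 0 < p) (hq : 0 < q) (hpq : 0 < p + p + q - 1) :
    IntegrableOn (weightedRieszKernel p q) (Ioc 0 1 ×ˢ Ioc 0 1) :=
  integrableOn_Ioc_prod_Ioc_of_symm (apply_swap p q) (integrableOn_lowerTriangle hp hq hpq)

theorem setIntegral_Ioc_prod_Ioc (hp : 0 < p) (hq : 0 < q) (hpq : 0 < p + p + q - 1) :
    ∫ z in Ioc 0 1 ×ˢ Ioc 0 1, weightedRieszKernel p q z = 2 * (beta p q / (p + p + q - 1)) := by
  rw [setIntegral_Ioc_prod_Ioc_of_symm (apply_swap p q) (integrableOn_lowerTriangle hp hq hpq),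
    setIntegral_congr_fun measurableSet_lowerTriangle (eqOn_lowerTriangle p q 0 1),
    setIntegral_lowerTriangle_rpow hp hq hpq, smul_eq_mul]

end weightedRieszKernel

section FbmCov

variable {H p t s : ℝ}

theorem rpow_mul_rpow_mul_fbmCov (ht : 0 < t) (hs : 0 < s) :
    t ^ (p - 1) * s ^ (p - 1) * fbmCov H t s =
      1 / 2 * (t ^ (p + 2 * H - 1) * s ^ (p - 1) + t ^ (p - 1) * s ^ (p + 2 * H - 1)
        - t ^ (p - 1) * s ^ (p - 1) * |t - s| ^ (2 * H + 1 - 1)) := by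
  have hpow {x : ℝ} (hx : 0 < x) : x ^ (p + 2 * H - 1) = x ^ (p - 1) * x ^ (2 * H) := by
    rw [← Real.rpow_add hx]
    ring_nf
  rw [fbmCov, hpow ht, hpow hs, add_sub_cancel_right]
  ring

theorem rpow_mul_fbmCov_one (ht : t ∈ Ioo (0 : ℝ) 1) :
    t ^ (p - 1) * fbmCov H t 1 =
      1 / 2 * (t ^ (p + 2 * H - 1) + t ^ (p - 1) - t ^ (p - 1) * (1 - t) ^ (2 * H + 1 - 1)) := by
  have habs : |t - 1| = 1 - t := by rw [abs_sub_comm, abs_of_pos (sub_pos.2 ht.2)]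
  simpa only [Real.one_rpow, mul_one, habs] using
    rpow_mul_rpow_mul_fbmCov (p := p) (H := H) ht.1 one_pos

theorem integral_rpow_mul_fbmCov_one (hp : 0 < p) (hH : -1 < 2 * H) (hpH : 0 < p + 2 * H) :
    ∫ t in (0 : ℝ)..1, t ^ (p - 1) * fbmCov H t 1 =
      1 / 2 * (1 / (p + 2 * H) + 1 / p - beta p (2 * H + 1)) := by
  have hq : 0 < 2 * H + 1 := by linarith
  have hint₁ := intervalIntegrable_rpow_sub_one hpH
  have hint₂ := intervalIntegrable_rpow_sub_one hp
  have hint₃ := intervalIntegrable_rpow_mul_sub_rpow hp hq one_pos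
  rw [intervalIntegral.integral_congr_Ioo_of_le zero_le_one fun t ↦ rpow_mul_fbmCov_one,
    intervalIntegral.integral_const_mul,
    intervalIntegral.integral_sub (hint₁.add hint₂) hint₃,
    intervalIntegral.integral_add hint₁ hint₂, integral_rpow_sub_one hpH,
    integral_rpow_sub_one hp, integral_rpow_mul_sub_rpow hp hq one_pos, Real.one_rpow, one_mul]

theorem eqOn_rpow_mul_rpow_mul_fbmCov (H p : ℝ) :
    EqOn (fun z : ℝ × ℝ ↦ z.1 ^ (p - 1) * z.2 ^ (p - 1) * fbmCov H z.1 z.2)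
      (fun z ↦ 1 / 2 * (z.1 ^ (p + 2 * H - 1) * z.2 ^ (p - 1) +
        z.1 ^ (p - 1) * z.2 ^ (p + 2 * H - 1) - weightedRieszKernel p (2 * H + 1) z))
      (Ioc 0 1 ×ˢ Ioc 0 1) :=
  fun _ hz ↦ rpow_mul_rpow_mul_fbmCov hz.1.1 hz.2.1

theorem integral_integral_rpow_mul_rpow_mul_fbmCov (hp : 0 < p) (hH : -1 < 2 * H)
    (hpH : 0 < p + 2 * H) :
    ∫ t in (0 : ℝ)..1, ∫ s in (0 : ℝ)..1, t ^ (p - 1) * s ^ (p - 1) * fbmCov H t s =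
      1 / (p * (p + 2 * H)) - beta p (2 * H + 1) / (2 * p + 2 * H) := by
  have hq : 0 < 2 * H + 1 := by linarith
  have hpq : 0 < p + p + (2 * H + 1) - 1 := by linarith
  have hint₁ := integrableOn_Ioc_prod_Ioc_rpow_mul_rpow hpH hp
  have hint₂ := integrableOn_Ioc_prod_Ioc_rpow_mul_rpow hp hpH
  have hint₁₂ := Integrable.fun_add hint₁ hint₂
  have hint₃ := weightedRieszKernel.integrableOn_Ioc_prod_Ioc hp hq hpq
  have hsquare : MeasurableSet (Ioc (0 : ℝ) 1 ×ˢ Ioc (0 : ℝ) 1) :=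
    measurableSet_Ioc.prod measurableSet_Ioc
  have hexpand := eqOn_rpow_mul_rpow_mul_fbmCov H p
  have hint := IntegrableOn.congr_fun ((hint₁₂.sub hint₃).const_mul (1 / 2)) hexpand.symm hsquare
  simp only [intervalIntegral.integral_of_le zero_le_one]
  rw [← setIntegral_prod _ hint, ← Measure.volume_eq_prod, setIntegral_congr_fun hsquare hexpand,
    integral_const_mul, integral_sub hint₁₂ hint₃, integral_add hint₁ hint₂,
    setIntegral_Ioc_prod_Ioc_rpow_mul_rpow hpH hp, setIntegral_Ioc_prod_Ioc_rpow_mul_rpow hp hpH,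
    weightedRieszKernel.setIntegral_Ioc_prod_Ioc hp hq hpq]
  ring_nf

end FbmCov

-- For `H ≤ 0` the conventions for `0 ^ (2 * H)` affect the integrands on null sets only.
theorem stmt5_general {H p : ℝ} (hp : 0 < p) (hH : -1 < 2 * H) (hpH : 0 < p + 2 * H) :
    1 - 2 * p * (∫ t in (0 : ℝ)..1, t ^ (p - 1) * fbmCov H t 1)
      + p ^ 2 * ∫ t in (0 : ℝ)..1, ∫ s in (0 : ℝ)..1, t ^ (p - 1) * s ^ (p - 1) * fbmCov H t s
      = ((p ^ 2 + 2 * p * H) / (2 * p + 2 * H))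
          * (Real.Gamma (2 * H + 1) * Real.Gamma p / Real.Gamma (p + 2 * H + 1)) := by
  have hbeta : Real.Gamma (2 * H + 1) * Real.Gamma p / Real.Gamma (p + 2 * H + 1) =
      beta p (2 * H + 1) := by
    rw [beta, mul_comm, add_assoc]
  have hpH' : p + H ≠ 0 := by linarith
  rw [hbeta, integral_rpow_mul_fbmCov_one hp hH hpH,
    integral_integral_rpow_mul_rpow_mul_fbmCov hp hH hpH]
  field_simp
  ring

/-- Lemma 3: for `H ∈ (0,1)` and an integer `n ≥ 1`,
`1 − 2n∫₀¹ t^{n−1} R_H(t,1) dt + n²∫₀¹∫₀¹ t^{n−1}s^{n−1} R_H(t,s) ds dt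
  = ((n²+2nH)/(2n+2H))·Γ(2H+1)Γ(n)/Γ(n+2H+1)`
(the squared 𝔥-norm of `t ↦ tⁿ`). -/
theorem stmt5 (H : ℝ) (hH : H ∈ Set.Ioo (0:ℝ) 1) (n : ℕ) (hn : 1 ≤ n) :
    1 - 2 * (n:ℝ) * (∫ t in (0:ℝ)..1, t ^ (n - 1) * fbmCov H t 1)
      + (n:ℝ) ^ 2 * ∫ t in (0:ℝ)..1, ∫ s in (0:ℝ)..1, t ^ (n - 1) * s ^ (n - 1) * fbmCov H t s
      = (((n:ℝ) ^ 2 + 2 * (n:ℝ) * H) / (2 * (n:ℝ) + 2 * H))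
          * (Real.Gamma (2 * H + 1) * Real.Gamma (n:ℝ) / Real.Gamma ((n:ℝ) + 2 * H + 1)) := by
  have hnpos : (0 : ℝ) < n := Nat.cast_pos.2 hn
  simpa only [← Nat.cast_pred hn, Real.rpow_natCast] using
    stmt5_general hnpos (by linarith [hH.1]) (by linarith [hH.1])
end

section
/- Let H ∈ (0,1). There exists a constant C_H depending only on H such that for every integer n ≥ 1, Σ_{j=1}^n Σ_{k=1}^n |β_{j,k}| ≤ C_H · n^{max(1−2H, 0)}. -/
/-- The fBm autocorrelation sequence `ρ_H(k) = (1/2)(|k+1|^{2H} − 2|k|^{2H} + |k−1|^{2H})`. -/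
noncomputable def rhoH (H : ℝ) (k : ℤ) : ℝ :=
  (1/2) * (|(k:ℝ) + 1| ^ (2 * H) - 2 * |(k:ℝ)| ^ (2 * H) + |(k:ℝ) - 1| ^ (2 * H))

/-!
The second difference defining `ρ_H` telescopes in both indices, so `∑_{j,k} ρ_H(j - k) = n^{2H}`,
the variance at time `n` of fractional Brownian motion. For `2H ≥ 1` convexity makes every term
nonnegative, so this is already the sum of the absolute values. For `2H ≤ 1` concavity makes every
off-diagonal term nonpositive, while the diagonal terms equal `1`; the absolute values then sum to
`2n - n^{2H}`.
-/

section Telescoping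

variable {G : Type*} [AddCommGroup G]

lemma sum_Icc_one_sub_pred (f : ℤ → G) (n : ℕ) :
    ∑ k ∈ Finset.Icc 1 n, (f k - f (k - 1)) = f n - f 0 := by
  induction n with
  | zero => simp
  | succ n ih =>
    rw [Finset.sum_Icc_succ_top (by lia), ih]
    push_cast
    rw [add_sub_cancel_right, add_comm, sub_add_sub_cancel]

lemma sum_sum_Icc_one_second_difference (f : ℤ → G) (n : ℕ) :
    ∑ j ∈ Finset.Icc 1 n, ∑ k ∈ Finset.Icc 1 n,
        (f (j - k + 1) - 2 • f (j - k) + f (j - k - 1)) = f n - 2 • f 0 + f (-n) := by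
  have inner (j : ℤ) : ∑ k ∈ Finset.Icc 1 n, (f (j - k + 1) - 2 • f (j - k) + f (j - k - 1)) =
      (f j - f (j - n)) - (f (j - 1) - f (j - 1 - n)) := by
    convert sum_Icc_one_sub_pred (fun k ↦ f (j - 1 - k) - f (j - k)) n using 1
    · refine Finset.sum_congr rfl fun k _ ↦ ?_
      rw [sub_right_comm j 1 (k : ℤ), sub_sub_sub_cancel_right, ← sub_add j (k : ℤ) 1]
      abel
    · rw [sub_zero, sub_zero]
      abel
  simp only [inner]
  rw [sum_Icc_one_sub_pred (fun j ↦ f j - f (j - n)), sub_self, zero_sub]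
  abel

end Telescoping

lemma convexOn_norm_rpow {E : Type*} [SeminormedAddCommGroup E] [NormedSpace ℝ E] {s : Set E}
    (hs : Convex ℝ s) {p : ℝ} (hp : 1 ≤ p) : ConvexOn ℝ s fun x ↦ ‖x‖ ^ p := by
  have image_nonneg : norm '' s ⊆ Set.Ici (0 : ℝ) := by
    rintro _ ⟨x, -, rfl⟩
    exact norm_nonneg x
  have image_convex : Convex ℝ (norm '' s) :=
    (hs.isPreconnected.image norm continuous_norm.continuousOn).convex
  exact ((convexOn_rpow hp).subset image_nonneg image_convex).comp (convexOn_norm hs)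
    ((Real.monotoneOn_rpow_Ici_of_exponent_nonneg (by linarith)).mono image_nonneg)

lemma abs_add_one_add_abs_sub_one {k : ℤ} (hk : k ≠ 0) : |k + 1| + |k - 1| = 2 * |k| := by
  grind

variable {H : ℝ}

lemma rhoH_zero (hH : 0 < H) : rhoH H 0 = 1 := by
  have hp : 2 * H ≠ 0 := by positivity
  norm_num [rhoH, Real.zero_rpow hp]

lemma sum_sum_rhoH (hH : 0 < H) (n : ℕ) :
    ∑ j ∈ Finset.Icc 1 n, ∑ k ∈ Finset.Icc 1 n, rhoH H ((j : ℤ) - (k : ℤ)) =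
      (n : ℝ) ^ (2 * H) := by
  have hp : 2 * H ≠ 0 := by positivity
  have h := sum_sum_Icc_one_second_difference (fun i ↦ |(i : ℝ)| ^ (2 * H)) n
  simp only [Int.cast_add, Int.cast_sub, Int.cast_neg, Int.cast_natCast, Int.cast_one,
    Int.cast_zero, nsmul_eq_mul, Nat.cast_ofNat, abs_neg, abs_zero, Nat.abs_cast,
    Real.zero_rpow hp] at h
  simp only [rhoH, ← Finset.mul_sum, Int.cast_sub, Int.cast_natCast, h]
  ring

lemma rhoH_nonneg (hH : 1 ≤ 2 * H) (k : ℤ) : 0 ≤ rhoH H k := by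
  have midpoint : (1 / 2 : ℝ) * (k + 1) + 1 / 2 * (k - 1) = k := by ring
  have h := (convexOn_norm_rpow convex_univ hH).2 (Set.mem_univ ((k : ℝ) + 1))
    (Set.mem_univ ((k : ℝ) - 1)) one_half_pos.le one_half_pos.le (add_halves 1)
  simp only [smul_eq_mul, midpoint, Real.norm_eq_abs] at h
  unfold rhoH
  linarith

lemma rhoH_nonpos (hH₀ : 0 ≤ H) (hH₁ : 2 * H ≤ 1) {k : ℤ} (hk : k ≠ 0) : rhoH H k ≤ 0 := by
  have midpoint : (1 / 2 : ℝ) * |(k : ℝ) + 1| + 1 / 2 * |(k : ℝ) - 1| = |(k : ℝ)| := by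
    have h : |(k : ℝ) + 1| + |(k : ℝ) - 1| = 2 * |(k : ℝ)| := by
      exact_mod_cast abs_add_one_add_abs_sub_one hk
    linarith
  have h := (Real.concaveOn_rpow (by positivity) hH₁).2 (abs_nonneg ((k : ℝ) + 1))
    (abs_nonneg ((k : ℝ) - 1)) one_half_pos.le one_half_pos.le (add_halves 1)
  simp only [smul_eq_mul, midpoint] at h
  unfold rhoH
  linarith

lemma abs_rhoH_eq_ite_sub (hH₀ : 0 < H) (hH₁ : 2 * H ≤ 1) (k : ℤ) :
    |rhoH H k| = (if k = 0 then 2 else 0) - rhoH H k := by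
  split_ifs with hk
  · norm_num [hk, rhoH_zero hH₀]
  · rw [abs_of_nonpos (rhoH_nonpos hH₀.le hH₁ hk), zero_sub]

lemma sum_sum_abs_rhoH_of_one_le (hH : 1 ≤ 2 * H) (n : ℕ) :
    ∑ j ∈ Finset.Icc 1 n, ∑ k ∈ Finset.Icc 1 n, |rhoH H ((j : ℤ) - (k : ℤ))| =
      (n : ℝ) ^ (2 * H) := by
  simp only [abs_of_nonneg (rhoH_nonneg hH _)]
  exact sum_sum_rhoH (by linarith) n

lemma sum_sum_abs_rhoH_of_le_one (hH₀ : 0 < H) (hH₁ : 2 * H ≤ 1) (n : ℕ) :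
    ∑ j ∈ Finset.Icc 1 n, ∑ k ∈ Finset.Icc 1 n, |rhoH H ((j : ℤ) - (k : ℤ))| =
      2 * n - (n : ℝ) ^ (2 * H) := by
  have diagonal : ∑ j ∈ Finset.Icc 1 n, ∑ k ∈ Finset.Icc 1 n,
      (if (j : ℤ) - (k : ℤ) = 0 then (2 : ℝ) else 0) = 2 * n := by
    simp +contextual [sub_eq_zero, mul_comm]
  simp only [abs_rhoH_eq_ite_sub hH₀ hH₁, Finset.sum_sub_distrib, diagonal, sum_sum_rhoH hH₀]

theorem stmt9_general (hH : 0 < H) {n : ℕ} (hn : 1 ≤ n) :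
    ∑ j ∈ Finset.Icc 1 n, ∑ k ∈ Finset.Icc 1 n,
        |(n : ℝ) ^ (-(2 * H)) * rhoH H ((j : ℤ) - (k : ℤ))| ≤
      2 * (n : ℝ) ^ max (1 - 2 * H) 0 := by
  have hn₀ : (0 : ℝ) < n := by exact_mod_cast hn
  have cancel : (n : ℝ) ^ (-(2 * H)) * (n : ℝ) ^ (2 * H) = 1 := by
    rw [← Real.rpow_add hn₀, neg_add_cancel, Real.rpow_zero]
  simp only [abs_mul, abs_of_pos (Real.rpow_pos_of_pos hn₀ _), ← Finset.mul_sum]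
  rcases le_total 1 (2 * H) with h | h
  · rw [sum_sum_abs_rhoH_of_one_le h, cancel, max_eq_right (by linarith), Real.rpow_zero]
    norm_num
  · have shift : (n : ℝ) ^ (1 - 2 * H) = (n : ℝ) ^ (-(2 * H)) * n := by
      rw [sub_eq_neg_add, Real.rpow_add hn₀, Real.rpow_one]
    rw [sum_sum_abs_rhoH_of_le_one hH h, max_eq_left (by linarith), shift]
    linarith

/-- Lemma 8 (c): for `H ∈ (0,1)` there is a constant `C_H` such that for all `n ≥ 1`,
`Σ_{j,k=1}^n |β_{j,k}| ≤ C_H · n^{max(1−2H,0)}`, where `β_{j,k} = n^{−2H} ρ_H(j−k)`. -/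
theorem stmt9 (H : ℝ) (hH : H ∈ Set.Ioo (0:ℝ) 1) :
    ∃ C : ℝ, 0 < C ∧ ∀ n : ℕ, 1 ≤ n →
      (∑ j ∈ Finset.Icc 1 n, ∑ k ∈ Finset.Icc 1 n,
          |(n:ℝ) ^ (-(2 * H)) * rhoH H ((j:ℤ) - (k:ℤ))|)
        ≤ C * (n:ℝ) ^ (max (1 - 2 * H) 0) :=
  ⟨2, two_pos, fun _ hn ↦ stmt9_general hH.1 hn⟩
end

section
/- Let H ∈ (1/2, 1). Then lim_{n→∞} 2H²(2H−1)² n^{6H} ∫_{[0,1]⁴} s₁ⁿ t₁ⁿ s₂ⁿ t₂ⁿ · ( (1−t₁)^{2H} + (1−t₂)^{2H} − |t₁−t₂|^{2H} ) · |t₁−s₁|^{2H−2} |t₂−s₂|^{2H−2} ds₁ ds₂ dt₁ dt₂ = σ²_{H,1}, where σ²_{H,1} = 2H²(2H−1)² ∫_{[0,1]⁴} |log y₁ − log x₁|^{2H−2} |log y₂ − log x₂|^{2H−2} · ( |log y₁|^{2H} + |log y₂|^{2H} − |log y₁ − log y₂|^{2H} ) dx₁ dx₂ dy₁ dy₂.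 -/
open Filter

/-!
Put `p = 1 / r`. The substitution `s = x ^ p` in each variable maps the unit cube to itself, turns
`s ^ r ds` into `p * x ^ p dx` and the distances to the corner into `p` times Box–Cox transforms.
The kernel is homogeneous in these distances, and its degree together with the four Jacobians
absorbs exactly the power of `r`. As `p → 0⁺` the Box–Cox transforms tend to logarithms, and the
limit follows by dominated convergence on a fixed cube.

The domination comes from convexity of `exp`: Box–Cox increments are at most logarithmic ones, and
at least `x ^ p * y ^ p` times them, so the Jacobian weight `x ^ p * y ^ p` pays for the singular
power as long as its exponent is at least `-1`. In the coordinates `log x` the dominating function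
is a sum of products of two convolution integrands of integrable functions.
-/

open MeasureTheory Set Topology

section BoxCox

/-- The Box–Cox transform `(x ^ p - 1) / p`. The substitution `s = x ^ p` turns the signed distance
`s - 1` into `p * boxCox p x`, and `boxCox p x` tends to `Real.log x` as `p → 0⁺`. -/
noncomputable def boxCox (p x : ℝ) : ℝ := p⁻¹ * (x ^ p - 1)

variable {p x y : ℝ}

lemma boxCox_one (p : ℝ) : boxCox p 1 = 0 := by simp [boxCox]

lemma boxCox_nonpos (hp : 0 < p) (hx : x ∈ Ioc 0 1) : boxCox p x ≤ 0 :=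
  mul_nonpos_of_nonneg_of_nonpos (inv_nonneg.2 hp.le)
    (sub_nonpos.2 (Real.rpow_le_one hx.1.le hx.2 hp.le))

-- Convexity of `exp`: as a function of `log x`, `boxCox p` lies above its tangents.
lemma rpow_mul_log_sub_log_le_boxCox_sub (hp : 0 < p) (hx : 0 < x) (hy : 0 < y) :
    x ^ p * (Real.log y - Real.log x) ≤ boxCox p y - boxCox p x := by
  have h_ratio : y ^ p = x ^ p * Real.exp (p * (Real.log y - Real.log x)) := by
    rw [Real.rpow_def_of_pos hx, Real.rpow_def_of_pos hy, ← Real.exp_add]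
    ring_nf
  calc x ^ p * (Real.log y - Real.log x)
      = p⁻¹ * (x ^ p * (p * (Real.log y - Real.log x) + 1) - x ^ p) := by field_simp; ring
    _ ≤ p⁻¹ * (x ^ p * Real.exp (p * (Real.log y - Real.log x)) - x ^ p) := by
        gcongr
        exact Real.add_one_le_exp _
    _ = boxCox p y - boxCox p x := by rw [← h_ratio, boxCox, boxCox]; ring

lemma abs_boxCox_sub_le (hp : 0 < p) (hx : x ∈ Ioc 0 1) (hy : y ∈ Ioc 0 1) :
    |boxCox p y - boxCox p x| ≤ |Real.log y - Real.log x| := by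
  have key : ∀ {z w : ℝ}, 0 < z → w ∈ Ioc 0 1 →
      boxCox p w - boxCox p z ≤ |Real.log w - Real.log z| := fun {z w} hz hw =>
    calc boxCox p w - boxCox p z ≤ w ^ p * (Real.log w - Real.log z) := by
          linarith [rpow_mul_log_sub_log_le_boxCox_sub hp hw.1 hz]
      _ ≤ w ^ p * |Real.log w - Real.log z| :=
          mul_le_mul_of_nonneg_left (le_abs_self _) (Real.rpow_nonneg hw.1.le p)
      _ ≤ |Real.log w - Real.log z| :=
          mul_le_of_le_one_left (abs_nonneg _) (Real.rpow_le_one hw.1.le hw.2 hp.le)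
  refine abs_sub_le_iff.2 ⟨key hx.1 hy, ?_⟩
  rw [abs_sub_comm]
  exact key hy.1 hx

lemma rpow_mul_abs_log_sub_log_le (hp : 0 < p) (hx : x ∈ Ioc 0 1) (hy : y ∈ Ioc 0 1) :
    x ^ p * y ^ p * |Real.log y - Real.log x| ≤ |boxCox p y - boxCox p x| := by
  wlog hxy : x ≤ y generalizing x y
  · rw [mul_comm (x ^ p), abs_sub_comm, abs_sub_comm (boxCox p y)]
    exact this hy hx (le_of_not_ge hxy)
  have h_log : 0 ≤ Real.log y - Real.log x := sub_nonneg.2 (Real.log_le_log hx.1 hxy)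
  calc x ^ p * y ^ p * |Real.log y - Real.log x| ≤ x ^ p * 1 * |Real.log y - Real.log x| := by
        have := hx.1.le
        gcongr
        exact Real.rpow_le_one hy.1.le hy.2 hp.le
    _ = x ^ p * (Real.log y - Real.log x) := by rw [mul_one, abs_of_nonneg h_log]
    _ ≤ boxCox p y - boxCox p x := rpow_mul_log_sub_log_le_boxCox_sub hp hx.1 hy.1
    _ ≤ |boxCox p y - boxCox p x| := le_abs_self _

lemma rpow_mul_abs_boxCox_sub_rpow_le {a : ℝ} (ha : -1 ≤ a) (hp : 0 < p) (hx : x ∈ Ioc 0 1)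
    (hy : y ∈ Ioc 0 1) :
    x ^ p * y ^ p * |boxCox p y - boxCox p x| ^ a ≤ |Real.log y - Real.log x| ^ a := by
  have hw_pos : 0 < x ^ p * y ^ p := mul_pos (Real.rpow_pos_of_pos hx.1 p)
    (Real.rpow_pos_of_pos hy.1 p)
  have hw_le : x ^ p * y ^ p ≤ 1 := mul_le_one₀ (Real.rpow_le_one hx.1.le hx.2 hp.le)
    (Real.rpow_nonneg hy.1.le p) (Real.rpow_le_one hy.1.le hy.2 hp.le)
  rcases le_or_gt 0 a with ha0 | ha0
  · calc x ^ p * y ^ p * |boxCox p y - boxCox p x| ^ a ≤ |boxCox p y - boxCox p x| ^ a :=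
          mul_le_of_le_one_left (by positivity) hw_le
      _ ≤ |Real.log y - Real.log x| ^ a :=
          Real.rpow_le_rpow (abs_nonneg _) (abs_boxCox_sub_le hp hx hy) ha0
  rcases eq_or_ne x y with rfl | hxy
  · simp [Real.zero_rpow ha0.ne]
  have h_log : 0 < |Real.log y - Real.log x| :=
    abs_pos.2 (sub_ne_zero.2 fun h => hxy (Real.log_injOn_pos hx.1 hy.1 h.symm))
  -- The weight compensates the loss `(x ^ p * y ^ p) ^ a` in the lower bound, since `1 + a ≥ 0`.
  calc x ^ p * y ^ p * |boxCox p y - boxCox p x| ^ a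
      ≤ x ^ p * y ^ p * (x ^ p * y ^ p * |Real.log y - Real.log x|) ^ a :=
        mul_le_mul_of_nonneg_left (Real.rpow_le_rpow_of_nonpos (mul_pos hw_pos h_log)
          (rpow_mul_abs_log_sub_log_le hp hx hy) ha0.le) hw_pos.le
    _ = (x ^ p * y ^ p) ^ (1 + a) * |Real.log y - Real.log x| ^ a := by
        rw [Real.mul_rpow hw_pos.le h_log.le, Real.rpow_add hw_pos, Real.rpow_one,
          ← mul_assoc]
    _ ≤ |Real.log y - Real.log x| ^ a :=
        mul_le_of_le_one_left (by positivity) (Real.rpow_le_one hw_pos.le hw_le (by linarith))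

lemma tendsto_abs_boxCox_sub_rpow (a : ℝ) (hx : 0 < x) (hy : 0 < y) :
    Tendsto (fun p => |boxCox p y - boxCox p x| ^ a) (𝓝[>] 0)
      (𝓝 (|Real.log y - Real.log x| ^ a)) := by
  rcases eq_or_ne x y with rfl | hxy
  · simp
  · have h_log : |Real.log y - Real.log x| ≠ 0 :=
      (abs_pos.2 (sub_ne_zero.2 fun h => hxy (Real.log_injOn_pos hx hy h.symm))).ne'
    exact ((tendsto_rpow_sub_one_log hy).sub (tendsto_rpow_sub_one_log hx)).abs.rpow_const
      (Or.inl h_log)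

lemma tendsto_abs_boxCox_rpow (b : ℝ) (hy : 0 < y) :
    Tendsto (fun p => |boxCox p y| ^ b) (𝓝[>] 0) (𝓝 (|Real.log y| ^ b)) := by
  simpa only [boxCox_one, Real.log_one, sub_zero] using tendsto_abs_boxCox_sub_rpow b one_pos hy

end BoxCox

section Integrability

lemma integrable_abs_rpow_mul_exp_neg_mul_abs_rpow {s p c : ℝ} (hs : -1 < s) (hp : 0 < p)
    (hc : 0 < c) : Integrable fun x : ℝ => |x| ^ s * Real.exp (-c * |x| ^ p) := by
  have h := (integrable_fun_norm_addHaar (volume : Measure ℝ)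
    (f := fun x : ℝ => x ^ s * Real.exp (-c * x ^ p))).2
  simpa using h (by simpa using integrableOn_rpow_mul_exp_neg_mul_rpow hs hp hc)

lemma integrable_abs_sub_rpow_mul_abs_rpow_mul_exp_neg {a b : ℝ} (ha : -1 < a) (hb : -1 < b) :
    Integrable fun q : ℝ × ℝ =>
      |q.2 - q.1| ^ a * |q.2| ^ b * Real.exp (-(|q.1| + |q.2|)) := by
  have h_exp : ∀ {c : ℝ}, -1 < c → Integrable fun w : ℝ => |w| ^ c * Real.exp (-(1 / 2) * |w|) :=
    fun hc => by
      simpa only [Real.rpow_one] using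
        integrable_abs_rpow_mul_exp_neg_mul_abs_rpow hc one_pos one_half_pos
  have h_conv := (h_exp hb).convolution_integrand (ContinuousLinearMap.mul ℝ ℝ) (h_exp ha)
  refine h_conv.mono' (by fun_prop) (Eventually.of_forall fun ⟨u, v⟩ => ?_)
  have h_split : Real.exp (-(|u| + |v|)) ≤
      Real.exp (-(1 / 2) * |v|) * Real.exp (-(1 / 2) * |u - v|) := by
    rw [← Real.exp_add]
    gcongr
    linarith [abs_sub u v, abs_nonneg u]
  rw [Real.norm_of_nonneg (by positivity), abs_sub_comm]
  calc |u - v| ^ a * |v| ^ b * Real.exp (-(|u| + |v|))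
      ≤ |u - v| ^ a * |v| ^ b * (Real.exp (-(1 / 2) * |v|) * Real.exp (-(1 / 2) * |u - v|)) := by
        gcongr
    _ = |v| ^ b * Real.exp (-(1 / 2) * |v|) * (|u - v| ^ a * Real.exp (-(1 / 2) * |u - v|)) := by
        ring

lemma measurePreserving_exp_Iic (c : ℝ) :
    MeasurePreserving Real.exp
      ((volume.restrict (Iic c)).withDensity fun u => ENNReal.ofReal (Real.exp u))
      (volume.restrict (Ioc 0 (Real.exp c))) where
  measurable := Real.measurable_exp
  map_eq := by
    simpa only [ContinuousLinearMap.det_toSpanSingleton, Real.abs_exp, Real.image_exp_Iic] using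
      map_withDensity_abs_det_fderiv_eq_addHaar volume
        (measurableSet_Iic (a := c)).nullMeasurableSet
        (fun u _ => (Real.hasDerivAt_exp u).hasDerivWithinAt.hasFDerivWithinAt)
        Real.exp_injective.injOn

/-- Lebesgue measure on the unit interval `(0, 1]`. -/
noncomputable abbrev unitMeasure : Measure ℝ := volume.restrict (Ioc 0 1)

lemma integrable_abs_log_sub_log_rpow_mul {a b : ℝ} (ha : -1 < a) (hb : -1 < b) :
    Integrable (fun q : ℝ × ℝ => |Real.log q.2 - Real.log q.1| ^ a * |Real.log q.2| ^ b)
      (unitMeasure.prod unitMeasure) := by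
  have h_exp := measurePreserving_exp_Iic 0
  rw [Real.exp_zero] at h_exp
  rw [← (h_exp.prod h_exp).integrable_comp (by fun_prop), prod_withDensity (by fun_prop)
    (by fun_prop), integrable_withDensity_iff (by fun_prop)
    (Eventually.of_forall fun q => by finiteness), Measure.prod_restrict]
  refine (integrable_abs_sub_rpow_mul_abs_rpow_mul_exp_neg ha hb).integrableOn.congr_fun
    (fun ⟨u, v⟩ ⟨hu, hv⟩ => ?_) (measurableSet_Iic.prod measurableSet_Iic)
  have hu' : |u| = -u := abs_of_nonpos hu
  have hv' : |v| = -v := abs_of_nonpos hv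
  simp only [Function.comp_apply, Prod.map_apply, Real.log_exp, ENNReal.toReal_mul,
    ENNReal.toReal_ofReal (Real.exp_nonneg _), hu', hv', ← Real.exp_add]
  ring_nf

variable {α β γ δ : Type*} [MeasurableSpace α] [MeasurableSpace β] [MeasurableSpace γ]
  [MeasurableSpace δ] {μ : Measure α} {ν : Measure β} {ρ : Measure γ} {σ : Measure δ}
  [SFinite μ] [SFinite ν] [SFinite ρ] [SFinite σ]

lemma measurePreserving_prod_interleave :
    MeasurePreserving (fun q : α × β × γ × δ => ((q.1, q.2.2.1), q.2.1, q.2.2.2))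
      (μ.prod (ν.prod (ρ.prod σ))) ((μ.prod ρ).prod (ν.prod σ)) := by
  have h_swap : MeasurePreserving (fun q : β × γ × δ => (q.2.1, q.1, q.2.2))
      (ν.prod (ρ.prod σ)) (ρ.prod (ν.prod σ)) :=
    (measurePreserving_prodAssoc ρ ν σ).comp
      ((Measure.measurePreserving_swap.prod (MeasurePreserving.id σ)).comp
        (measurePreserving_prodAssoc ν ρ σ).symm)
  exact (measurePreserving_prodAssoc μ ρ (ν.prod σ)).symm.comp
    ((MeasurePreserving.id μ).prod h_swap)

lemma integral_prod_prod_prod {E : Type*} [NormedAddCommGroup E] [NormedSpace ℝ E]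
    {f : α × β × γ × δ → E} (hf : Integrable f (μ.prod (ν.prod (ρ.prod σ)))) :
    ∫ a, ∫ b, ∫ c, ∫ d, f (a, b, c, d) ∂σ ∂ρ ∂ν ∂μ = ∫ q, f q ∂μ.prod (ν.prod (ρ.prod σ)) := by
  rw [integral_prod _ hf]
  refine integral_congr_ae ?_
  filter_upwards [hf.prod_right_ae] with a ha
  rw [integral_prod _ ha]
  refine integral_congr_ae ?_
  filter_upwards [ha.prod_right_ae] with b hb
  exact (integral_prod _ hb).symm

end Integrability

section UnitCube

/-- Lebesgue measure on the unit cube `(0, 1]⁴`. -/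
noncomputable abbrev unitCubeMeasure : Measure (ℝ × ℝ × ℝ × ℝ) :=
  unitMeasure.prod (unitMeasure.prod (unitMeasure.prod unitMeasure))

lemma ae_mem_unitCube : ∀ᵐ q ∂unitCubeMeasure,
    q ∈ (Ioc 0 1 ×ˢ Ioc 0 1 ×ˢ Ioc 0 1 ×ˢ Ioc 0 1 : Set (ℝ × ℝ × ℝ × ℝ)) := by
  simp only [unitCubeMeasure, Measure.prod_restrict]
  exact ae_restrict_mem (by measurability)

lemma intervalIntegral_eq_integral_unitCubeMeasure {F : ℝ → ℝ → ℝ → ℝ → ℝ}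
    (hF : Integrable (fun q => F q.1 q.2.1 q.2.2.1 q.2.2.2) unitCubeMeasure) :
    ∫ x₁ in (0 : ℝ)..1, ∫ x₂ in (0 : ℝ)..1, ∫ y₁ in (0 : ℝ)..1, ∫ y₂ in (0 : ℝ)..1, F x₁ x₂ y₁ y₂ =
      ∫ q, F q.1 q.2.1 q.2.2.1 q.2.2.2 ∂unitCubeMeasure := by
  simp only [intervalIntegral.integral_of_le zero_le_one]
  exact integral_prod_prod_prod hF

lemma integral_rpow_mul_eq {r : ℝ} (hr : 0 < r) (f : ℝ → ℝ) :
    ∫ s in (0 : ℝ)..1, s ^ r * f s = r⁻¹ * ∫ x in (0 : ℝ)..1, x ^ r⁻¹ * f (x ^ r⁻¹) := by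
  have h_subst := integral_comp_rpow_Ioi_of_pos (g := (Ioc 0 1).indicator fun s => s ^ r * f s)
    (inv_pos.2 hr)
  have h_inter : Ioi (0 : ℝ) ∩ Ioc 0 1 = Ioc 0 1 := inter_eq_right.2 Ioc_subset_Ioi_self
  rw [setIntegral_indicator measurableSet_Ioc, h_inter] at h_subst
  simp only [intervalIntegral.integral_of_le zero_le_one]
  rw [← h_subst, ← integral_const_mul]
  nth_rw 2 [← h_inter]
  rw [← setIntegral_indicator measurableSet_Ioc]
  refine setIntegral_congr_fun measurableSet_Ioi fun x hx => ?_
  have hx0 : 0 < x := hx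
  by_cases hx1 : x ≤ 1
  · have h_mem : x ^ r⁻¹ ∈ Ioc (0 : ℝ) 1 :=
      ⟨Real.rpow_pos_of_pos hx0 _, Real.rpow_le_one hx0.le hx1 (inv_pos.2 hr).le⟩
    simp only [indicator_of_mem h_mem, indicator_of_mem (show x ∈ Ioc 0 1 from ⟨hx0, hx1⟩),
      smul_eq_mul, Real.rpow_inv_rpow hx0.le hr.ne', Real.rpow_sub_one hx0.ne']
    field_simp
  · have h_notMem : x ^ r⁻¹ ∉ Ioc (0 : ℝ) 1 := fun h =>
      (Real.one_lt_rpow (not_le.1 hx1) (inv_pos.2 hr)).not_ge h.2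
    have hx_notMem : x ∉ Ioc (0 : ℝ) 1 := fun h => hx1 h.2
    simp only [indicator_of_notMem h_notMem, indicator_of_notMem hx_notMem, smul_zero]

lemma integral_unitCube_rpow_mul_eq {r : ℝ} (hr : 0 < r) (F : ℝ → ℝ → ℝ → ℝ → ℝ) :
    ∫ s₁ in (0 : ℝ)..1, ∫ s₂ in (0 : ℝ)..1, ∫ t₁ in (0 : ℝ)..1, ∫ t₂ in (0 : ℝ)..1,
        s₁ ^ r * (s₂ ^ r * (t₁ ^ r * (t₂ ^ r * F s₁ s₂ t₁ t₂))) =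
      (r ^ 4)⁻¹ * ∫ x₁ in (0 : ℝ)..1, ∫ x₂ in (0 : ℝ)..1, ∫ y₁ in (0 : ℝ)..1, ∫ y₂ in (0 : ℝ)..1,
        x₁ ^ r⁻¹ * (x₂ ^ r⁻¹ * (y₁ ^ r⁻¹ * (y₂ ^ r⁻¹ *
          F (x₁ ^ r⁻¹) (x₂ ^ r⁻¹) (y₁ ^ r⁻¹) (y₂ ^ r⁻¹)))) := by
  simp only [intervalIntegral.integral_const_mul, integral_rpow_mul_eq hr,
    mul_left_comm _ r⁻¹]
  ring

end UnitCube

section VarianceKernel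

/-- The integrand of the asymptotic variance as a function of the signed distances `uᵢ`, `vᵢ` of the
four variables to `1`. These are `log xᵢ`, `log yᵢ` in the limit, and `sᵢ - 1`, `tᵢ - 1` before it.
The exponents `(a₁, a₂, b) = (2H - 2, 2H - 2, 2H)` are those of fractional Brownian motion. -/
noncomputable def varianceKernel (a₁ a₂ b u₁ u₂ v₁ v₂ : ℝ) : ℝ :=
  |v₁ - u₁| ^ a₁ * |v₂ - u₂| ^ a₂ * (|v₁| ^ b + |v₂| ^ b - |v₁ - v₂| ^ b)

/-- The integrand `varianceKernel` in the coordinates `boxCox p`, with the Jacobian weights left by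
the substitution `s = x ^ p`. -/
noncomputable def boxCoxKernel (a₁ a₂ b p x₁ x₂ y₁ y₂ : ℝ) : ℝ :=
  x₁ ^ p * (x₂ ^ p * (y₁ ^ p * (y₂ ^ p *
    varianceKernel a₁ a₂ b (boxCox p x₁) (boxCox p x₂) (boxCox p y₁) (boxCox p y₂))))

/-- The integrand `varianceKernel` in logarithmic coordinates, that is, the integrand of `σ²`. -/
noncomputable def logKernel (a₁ a₂ b x₁ x₂ y₁ y₂ : ℝ) : ℝ :=
  varianceKernel a₁ a₂ b (Real.log x₁) (Real.log x₂) (Real.log y₁) (Real.log y₂)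

/-- The integrable function dominating both `logKernel` and every `boxCoxKernel`. -/
noncomputable def logKernelBound (a₁ a₂ b x₁ x₂ y₁ y₂ : ℝ) : ℝ :=
  |Real.log y₁ - Real.log x₁| ^ a₁ * |Real.log y₂ - Real.log x₂| ^ a₂ *
    (|Real.log y₁| ^ b + |Real.log y₂| ^ b)

variable {a₁ a₂ b : ℝ}

lemma varianceKernel_mul (a₁ a₂ b u₁ u₂ v₁ v₂ : ℝ) {c : ℝ} (hc : 0 < c) :
    varianceKernel a₁ a₂ b (c * u₁) (c * u₂) (c * v₁) (c * v₂) =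
      c ^ (a₁ + a₂ + b) * varianceKernel a₁ a₂ b u₁ u₂ v₁ v₂ := by
  simp only [varianceKernel, ← mul_sub, abs_mul, abs_of_pos hc,
    Real.mul_rpow hc.le (abs_nonneg _), Real.rpow_add hc]
  ring

lemma abs_varianceKernel_le {u₁ u₂ v₁ v₂ : ℝ} (hb : 0 ≤ b) (hv₁ : v₁ ≤ 0) (hv₂ : v₂ ≤ 0) :
    |varianceKernel a₁ a₂ b u₁ u₂ v₁ v₂| ≤
      |v₁ - u₁| ^ a₁ * |v₂ - u₂| ^ a₂ * (|v₁| ^ b + |v₂| ^ b) := by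
  have h₁ : 0 ≤ |v₁| ^ b := by positivity
  have h₂ : 0 ≤ |v₂| ^ b := by positivity
  have h_diff : |v₁ - v₂| ^ b ≤ |v₁| ^ b + |v₂| ^ b := by
    rcases le_total v₁ v₂ with h | h
    · have : |v₁ - v₂| ≤ |v₁| := by
        rw [abs_of_nonpos hv₁, abs_of_nonpos (sub_nonpos.2 h)]; linarith
      exact (Real.rpow_le_rpow (abs_nonneg _) this hb).trans (le_add_of_nonneg_right h₂)
    · have : |v₁ - v₂| ≤ |v₂| := by
        rw [abs_of_nonpos hv₂, abs_of_nonneg (sub_nonneg.2 h)]; linarith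
      exact (Real.rpow_le_rpow (abs_nonneg _) this hb).trans (le_add_of_nonneg_left h₁)
  have h_nonneg : 0 ≤ |v₁ - v₂| ^ b := by positivity
  rw [varianceKernel, abs_mul, abs_of_nonneg (by positivity : 0 ≤ |v₁ - u₁| ^ a₁ * |v₂ - u₂| ^ a₂),
    abs_of_nonneg (sub_nonneg.2 h_diff)]
  gcongr
  exact sub_le_self _ h_nonneg

lemma abs_logKernel_le {x₁ x₂ y₁ y₂ : ℝ} (hb : 0 ≤ b) (hy₁ : y₁ ∈ Ioc 0 1) (hy₂ : y₂ ∈ Ioc 0 1) :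
    |logKernel a₁ a₂ b x₁ x₂ y₁ y₂| ≤ logKernelBound a₁ a₂ b x₁ x₂ y₁ y₂ :=
  abs_varianceKernel_le hb (Real.log_nonpos hy₁.1.le hy₁.2) (Real.log_nonpos hy₂.1.le hy₂.2)

lemma abs_boxCox_rpow_le {p y : ℝ} (hb : 0 ≤ b) (hp : 0 < p) (hy : y ∈ Ioc 0 1) :
    |boxCox p y| ^ b ≤ |Real.log y| ^ b := by
  have h := abs_boxCox_sub_le hp (right_mem_Ioc.2 one_pos) hy
  rw [boxCox_one, Real.log_one, sub_zero, sub_zero] at h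
  exact Real.rpow_le_rpow (abs_nonneg _) h hb

lemma abs_boxCoxKernel_le {p x₁ x₂ y₁ y₂ : ℝ} (ha₁ : -1 ≤ a₁) (ha₂ : -1 ≤ a₂) (hb : 0 ≤ b)
    (hp : 0 < p) (hx₁ : x₁ ∈ Ioc 0 1) (hx₂ : x₂ ∈ Ioc 0 1) (hy₁ : y₁ ∈ Ioc 0 1)
    (hy₂ : y₂ ∈ Ioc 0 1) :
    |boxCoxKernel a₁ a₂ b p x₁ x₂ y₁ y₂| ≤ logKernelBound a₁ a₂ b x₁ x₂ y₁ y₂ := by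
  have h_pow : ∀ {x : ℝ}, x ∈ Ioc 0 1 → 0 ≤ x ^ p := fun hx => Real.rpow_nonneg hx.1.le p
  have hx₁' := h_pow hx₁
  have hx₂' := h_pow hx₂
  have hy₁' := h_pow hy₁
  have hy₂' := h_pow hy₂
  simp only [boxCoxKernel, abs_mul, abs_of_nonneg hx₁', abs_of_nonneg hx₂', abs_of_nonneg hy₁',
    abs_of_nonneg hy₂']
  calc x₁ ^ p * (x₂ ^ p * (y₁ ^ p * (y₂ ^ p *
        |varianceKernel a₁ a₂ b (boxCox p x₁) (boxCox p x₂) (boxCox p y₁) (boxCox p y₂)|)))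
      ≤ x₁ ^ p * (x₂ ^ p * (y₁ ^ p * (y₂ ^ p * (|boxCox p y₁ - boxCox p x₁| ^ a₁ *
        |boxCox p y₂ - boxCox p x₂| ^ a₂ * (|boxCox p y₁| ^ b + |boxCox p y₂| ^ b))))) := by
        gcongr
        exact abs_varianceKernel_le hb (boxCox_nonpos hp hy₁) (boxCox_nonpos hp hy₂)
    _ = (x₁ ^ p * y₁ ^ p * |boxCox p y₁ - boxCox p x₁| ^ a₁) *
        (x₂ ^ p * y₂ ^ p * |boxCox p y₂ - boxCox p x₂| ^ a₂) *
        (|boxCox p y₁| ^ b + |boxCox p y₂| ^ b) := by ring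
    _ ≤ logKernelBound a₁ a₂ b x₁ x₂ y₁ y₂ := by
        rw [logKernelBound]
        gcongr ?_ * ?_ * (?_ + ?_)
        · exact rpow_mul_abs_boxCox_sub_rpow_le ha₁ hp hx₁ hy₁
        · exact rpow_mul_abs_boxCox_sub_rpow_le ha₂ hp hx₂ hy₂
        · exact abs_boxCox_rpow_le hb hp hy₁
        · exact abs_boxCox_rpow_le hb hp hy₂

lemma tendsto_boxCoxKernel_logKernel (a₁ a₂ b : ℝ) {x₁ x₂ y₁ y₂ : ℝ} (hx₁ : 0 < x₁) (hx₂ : 0 < x₂)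
    (hy₁ : 0 < y₁) (hy₂ : 0 < y₂) :
    Tendsto (fun p => boxCoxKernel a₁ a₂ b p x₁ x₂ y₁ y₂) (𝓝[>] 0)
      (𝓝 (logKernel a₁ a₂ b x₁ x₂ y₁ y₂)) := by
  have h_weight : ∀ {x : ℝ}, 0 < x → Tendsto (fun p : ℝ => x ^ p) (𝓝[>] 0) (𝓝 1) := fun {x} hx => by
    simpa using ((Real.continuousAt_const_rpow hx.ne').tendsto (x := 0)).mono_left
      nhdsWithin_le_nhds
  have h_kernel := ((tendsto_abs_boxCox_sub_rpow a₁ hx₁ hy₁).mul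
    (tendsto_abs_boxCox_sub_rpow a₂ hx₂ hy₂)).mul
      (((tendsto_abs_boxCox_rpow b hy₁).add (tendsto_abs_boxCox_rpow b hy₂)).sub
        (tendsto_abs_boxCox_sub_rpow b hy₂ hy₁))
  simpa only [one_mul, boxCoxKernel, logKernel, varianceKernel] using
    (h_weight hx₁).mul ((h_weight hx₂).mul ((h_weight hy₁).mul ((h_weight hy₂).mul h_kernel)))

lemma integrable_logKernelBound (ha₁ : -1 < a₁) (ha₂ : -1 < a₂) (hb : -1 < b) :
    Integrable (fun q => logKernelBound a₁ a₂ b q.1 q.2.1 q.2.2.1 q.2.2.2) unitCubeMeasure := by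
  have h_pair {c₁ c₂ : ℝ} (hc₁ : -1 < c₁) (hc₂ : -1 < c₂) :=
    measurePreserving_prod_interleave.integrable_comp_of_integrable
      ((integrable_abs_log_sub_log_rpow_mul ha₁ hc₁).mul_prod
        (integrable_abs_log_sub_log_rpow_mul ha₂ hc₂))
  refine ((h_pair hb neg_one_lt_zero).add (h_pair neg_one_lt_zero hb)).congr
    (Eventually.of_forall fun q => ?_)
  simp only [Function.comp_apply, Pi.add_apply, Real.rpow_zero, logKernelBound]
  ring

lemma integrable_boxCoxKernel {p : ℝ} (ha₁ : -1 < a₁) (ha₂ : -1 < a₂) (hb : 0 ≤ b) (hp : 0 < p) :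
    Integrable (fun q => boxCoxKernel a₁ a₂ b p q.1 q.2.1 q.2.2.1 q.2.2.2) unitCubeMeasure := by
  refine (integrable_logKernelBound ha₁ ha₂ (neg_one_lt_zero.trans_le hb)).mono'
    (by unfold boxCoxKernel varianceKernel boxCox; fun_prop) ?_
  filter_upwards [ae_mem_unitCube] with q ⟨hx₁, hx₂, hy₁, hy₂⟩
  exact abs_boxCoxKernel_le ha₁.le ha₂.le hb hp hx₁ hx₂ hy₁ hy₂

lemma integrable_logKernel (ha₁ : -1 < a₁) (ha₂ : -1 < a₂) (hb : 0 ≤ b) :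
    Integrable (fun q => logKernel a₁ a₂ b q.1 q.2.1 q.2.2.1 q.2.2.2) unitCubeMeasure := by
  refine (integrable_logKernelBound ha₁ ha₂ (neg_one_lt_zero.trans_le hb)).mono'
    (by unfold logKernel varianceKernel; fun_prop) ?_
  filter_upwards [ae_mem_unitCube] with q ⟨_, _, hy₁, hy₂⟩
  exact abs_logKernel_le hb hy₁ hy₂

lemma tendsto_integral_boxCoxKernel (ha₁ : -1 < a₁) (ha₂ : -1 < a₂) (hb : 0 ≤ b) :
    Tendsto (fun p => ∫ q, boxCoxKernel a₁ a₂ b p q.1 q.2.1 q.2.2.1 q.2.2.2 ∂unitCubeMeasure)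
      (𝓝[>] 0) (𝓝 (∫ q, logKernel a₁ a₂ b q.1 q.2.1 q.2.2.1 q.2.2.2 ∂unitCubeMeasure)) := by
  refine tendsto_integral_filter_of_dominated_convergence
    (fun q => logKernelBound a₁ a₂ b q.1 q.2.1 q.2.2.1 q.2.2.2) ?_ ?_
    (integrable_logKernelBound ha₁ ha₂ (neg_one_lt_zero.trans_le hb)) ?_
  · filter_upwards [self_mem_nhdsWithin] with p hp
    exact (integrable_boxCoxKernel ha₁ ha₂ hb hp).aestronglyMeasurable
  · filter_upwards [self_mem_nhdsWithin] with p hp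
    filter_upwards [ae_mem_unitCube] with q ⟨hx₁, hx₂, hy₁, hy₂⟩
    exact abs_boxCoxKernel_le ha₁.le ha₂.le hb hp hx₁ hx₂ hy₁ hy₂
  · filter_upwards [ae_mem_unitCube] with q ⟨hx₁, hx₂, hy₁, hy₂⟩
    exact tendsto_boxCoxKernel_logKernel a₁ a₂ b hx₁.1 hx₂.1 hy₁.1 hy₂.1

lemma rpow_mul_varianceKernel_rpow_sub_one (a₁ a₂ b x₁ x₂ y₁ y₂ : ℝ) {r : ℝ} (hr : 0 < r) :
    r ^ (a₁ + a₂ + b) * varianceKernel a₁ a₂ b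
        (x₁ ^ r⁻¹ - 1) (x₂ ^ r⁻¹ - 1) (y₁ ^ r⁻¹ - 1) (y₂ ^ r⁻¹ - 1) =
      varianceKernel a₁ a₂ b
        (boxCox r⁻¹ x₁) (boxCox r⁻¹ x₂) (boxCox r⁻¹ y₁) (boxCox r⁻¹ y₂) := by
  simp only [boxCox, inv_inv, varianceKernel_mul _ _ _ _ _ _ _ hr]

lemma rpow_mul_integral_varianceKernel {r : ℝ} (ha₁ : -1 < a₁) (ha₂ : -1 < a₂) (hb : 0 ≤ b)
    (hr : 0 < r) :
    r ^ (a₁ + a₂ + b + 4) *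
        ∫ s₁ in (0 : ℝ)..1, ∫ s₂ in (0 : ℝ)..1, ∫ t₁ in (0 : ℝ)..1, ∫ t₂ in (0 : ℝ)..1,
          s₁ ^ r * (s₂ ^ r * (t₁ ^ r * (t₂ ^ r *
            varianceKernel a₁ a₂ b (s₁ - 1) (s₂ - 1) (t₁ - 1) (t₂ - 1)))) =
      ∫ q, boxCoxKernel a₁ a₂ b r⁻¹ q.1 q.2.1 q.2.2.1 q.2.2.2 ∂unitCubeMeasure := by
  have h_pow : r ^ (a₁ + a₂ + b + 4) * (r ^ 4)⁻¹ = r ^ (a₁ + a₂ + b) := by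
    rw [← Real.rpow_natCast, Nat.cast_ofNat, ← Real.rpow_neg hr.le, ← Real.rpow_add hr,
      add_neg_cancel_right]
  rw [integral_unitCube_rpow_mul_eq hr fun s₁ s₂ t₁ t₂ =>
      varianceKernel a₁ a₂ b (s₁ - 1) (s₂ - 1) (t₁ - 1) (t₂ - 1),
    ← mul_assoc, h_pow, ← intervalIntegral_eq_integral_unitCubeMeasure
      (integrable_boxCoxKernel ha₁ ha₂ hb (inv_pos.2 hr))]
  simp only [boxCoxKernel, ← rpow_mul_varianceKernel_rpow_sub_one _ _ _ _ _ _ _ hr,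
    ← intervalIntegral.integral_const_mul, mul_left_comm (r ^ (a₁ + a₂ + b))]

end VarianceKernel

theorem stmt13_general {a₁ a₂ b : ℝ} (ha₁ : -1 < a₁) (ha₂ : -1 < a₂) (hb : 0 ≤ b) :
    Tendsto
      (fun r : ℝ => r ^ (a₁ + a₂ + b + 4) *
        ∫ s₁ in (0 : ℝ)..1, ∫ s₂ in (0 : ℝ)..1, ∫ t₁ in (0 : ℝ)..1, ∫ t₂ in (0 : ℝ)..1,
          s₁ ^ r * t₁ ^ r * s₂ ^ r * t₂ ^ r *
            ((1 - t₁) ^ b + (1 - t₂) ^ b - |t₁ - t₂| ^ b) *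
            |t₁ - s₁| ^ a₁ * |t₂ - s₂| ^ a₂)
      atTop
      (𝓝 (∫ x₁ in (0 : ℝ)..1, ∫ x₂ in (0 : ℝ)..1, ∫ y₁ in (0 : ℝ)..1, ∫ y₂ in (0 : ℝ)..1,
          |Real.log y₁ - Real.log x₁| ^ a₁ * |Real.log y₂ - Real.log x₂| ^ a₂ *
            (|Real.log y₁| ^ b + |Real.log y₂| ^ b - |Real.log y₁ - Real.log y₂| ^ b))) := by
  have h_lim := (tendsto_integral_boxCoxKernel ha₁ ha₂ hb).comp tendsto_inv_atTop_nhdsGT_zero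
  rw [← intervalIntegral_eq_integral_unitCubeMeasure (integrable_logKernel ha₁ ha₂ hb)] at h_lim
  refine h_lim.congr' ?_
  filter_upwards [eventually_gt_atTop 0] with r hr
  rw [Function.comp_apply, ← rpow_mul_integral_varianceKernel ha₁ ha₂ hb hr]
  congr 1
  refine intervalIntegral.integral_congr fun s₁ _ => intervalIntegral.integral_congr fun s₂ _ =>
    intervalIntegral.integral_congr fun t₁ ht₁ => intervalIntegral.integral_congr fun t₂ ht₂ => ?_
  rw [uIcc_of_le zero_le_one] at ht₁ ht₂
  simp only [varianceKernel, sub_sub_sub_cancel_right, abs_sub_comm _ (1 : ℝ),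
    abs_of_nonneg (sub_nonneg.2 ht₁.2), abs_of_nonneg (sub_nonneg.2 ht₂.2)]
  ring

/-- Identification of the asymptotic variance `σ²_{H,1}` for `H ∈ (1/2,1)`:
`2H²(2H−1)² n^{6H} ∫_{[0,1]⁴} s₁ⁿt₁ⁿs₂ⁿt₂ⁿ ((1−t₁)^{2H}+(1−t₂)^{2H}−|t₁−t₂|^{2H})
|t₁−s₁|^{2H−2}|t₂−s₂|^{2H−2} → σ²_{H,1}` as `n → ∞`, where `σ²_{H,1}` is given by the
logarithmic-variables integral. -/
theorem stmt13 (H : ℝ) (hH : H ∈ Set.Ioo (1/2 : ℝ) 1) :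
    Tendsto
      (fun n : ℕ => 2 * H ^ 2 * (2 * H - 1) ^ 2 * (n:ℝ) ^ (6 * H) *
        ∫ s₁ in (0:ℝ)..1, ∫ s₂ in (0:ℝ)..1, ∫ t₁ in (0:ℝ)..1, ∫ t₂ in (0:ℝ)..1,
          s₁ ^ n * t₁ ^ n * s₂ ^ n * t₂ ^ n *
            ((1 - t₁) ^ (2 * H) + (1 - t₂) ^ (2 * H) - |t₁ - t₂| ^ (2 * H)) *
            |t₁ - s₁| ^ (2 * H - 2) * |t₂ - s₂| ^ (2 * H - 2))
      atTop
      (nhds (2 * H ^ 2 * (2 * H - 1) ^ 2 *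
        ∫ x₁ in (0:ℝ)..1, ∫ x₂ in (0:ℝ)..1, ∫ y₁ in (0:ℝ)..1, ∫ y₂ in (0:ℝ)..1,
          |Real.log y₁ - Real.log x₁| ^ (2 * H - 2) *
            |Real.log y₂ - Real.log x₂| ^ (2 * H - 2) *
            (|Real.log y₁| ^ (2 * H) + |Real.log y₂| ^ (2 * H)
              - |Real.log y₁ - Real.log y₂| ^ (2 * H)))) := by
  have h := (stmt13_general (a₁ := 2 * H - 2) (a₂ := 2 * H - 2) (b := 2 * H) (by linarith [hH.1])
    (by linarith [hH.1]) (by linarith [hH.1])).comp tendsto_natCast_atTop_atTop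
  have h_exp : 2 * H - 2 + (2 * H - 2) + 2 * H + 4 = 6 * H := by ring
  simpa only [Function.comp_def, Real.rpow_natCast, h_exp, ← mul_assoc] using
    h.const_mul (2 * H ^ 2 * (2 * H - 1) ^ 2)
end

section
/- Let H ∈ (1/2, 1). Then lim_{n→∞} H³(2H−1)³ n^{2+2H} ∫_{[0,1]⁴} t₁ⁿ t₂ⁿ · ( ∫_{s₁}^1 ∫_{s₂}^1 θ₁ⁿ θ₂ⁿ |θ₁−θ₂|^{2H−2} dθ₁ dθ₂ ) · |t₁−s₁|^{2H−2} |t₂−s₂|^{2H−2} ds₁ dt₁ ds₂ dt₂ = σ²_{H,2}, where σ²_{H,2} = H³(2H−1)³ ( ∫_{[0,1]²} (1−s₁)^{2H−2} (1−s₂)^{2H−2} ds₁ ds₂ ) · ( ∫_{[0,1]²} |log x₁ − log x₂|^{2H−2} dx₁ dx₂ ). -/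
open Filter

/-!
The variables `t₁`, `t₂` integrate out. Since `n tⁿ dt` concentrates at `t = 1`,
`n ∫₀¹ tⁿ |t - s| ^ a dt` tends to `(1 - s) ^ a`, and it stays below a constant times
`(1 - s) ^ min a 0`, which is integrable for `-1 < a`. The substitution `θᵢ = 1 - uᵢ / n` turns
`n ^ (2 + b) ∫∫ θ₁ⁿ θ₂ⁿ |θ₁ - θ₂| ^ b` into the Riesz energy of truncations of `(1 - u / n)ⁿ`.
These are dominated by their limit `e⁻ᵘ`, so the energies are bounded by, and tend to, that of
`e⁻ᵘ`, which the change of variables `x = e⁻ᵘ` identifies with `∫∫ |log x₁ - log x₂| ^ b`.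
Dominated convergence over `(s₁, s₂) ∈ (0, 1)²` combines the two limits.
-/

open MeasureTheory Real Set Topology

section TruncatedPower

/-- The power `|x| ^ a` restricted to `(-δ, δ)` and extended by zero: the part near the singularity,
which is split off when `|x| ^ a` is bounded by integrable functions. -/
noncomputable def truncAbsRpow (a δ x : ℝ) : ℝ := (Ioo (-δ) δ).indicator (fun y => |y| ^ a) x

variable {a δ x : ℝ}

lemma truncAbsRpow_of_abs_lt (h : |x| < δ) : truncAbsRpow a δ x = |x| ^ a :=
  indicator_of_mem (mem_Ioo.2 (abs_lt.1 h)) _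

lemma truncAbsRpow_nonneg (a δ x : ℝ) : 0 ≤ truncAbsRpow a δ x :=
  indicator_nonneg (fun _ _ => by positivity) x

lemma integral_truncAbsRpow (ha : -1 < a) (hδ : 0 < δ) :
    ∫ x, truncAbsRpow a δ x = 2 * (δ ^ (a + 1) / (a + 1)) := by
  have h_even (x : ℝ) : truncAbsRpow a δ x = (Iio δ).indicator (fun y => y ^ a) |x| := by
    simp only [truncAbsRpow, indicator, mem_Ioo, mem_Iio, abs_lt]
  simp_rw [h_even]
  rw [integral_comp_abs, setIntegral_indicator measurableSet_Iio, Ioi_inter_Iio,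
    ← integral_Ioc_eq_integral_Ioo, ← intervalIntegral.integral_of_le hδ.le,
    integral_rpow (Or.inl ha), zero_rpow (by linarith), sub_zero]

lemma integrable_truncAbsRpow (ha : -1 < a) (hδ : 0 < δ) : Integrable (truncAbsRpow a δ) := by
  have ha' : 0 < a + 1 := by linarith
  refine Integrable.of_integral_ne_zero ?_
  rw [integral_truncAbsRpow ha hδ]
  positivity

lemma setIntegral_truncAbsRpow_sub_le (ha : -1 < a) (hδ : 0 < δ) (s : ℝ) (T : Set ℝ) :
    ∫ t in T, truncAbsRpow a δ (t - s) ≤ 2 * (δ ^ (a + 1) / (a + 1)) := by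
  rw [← integral_truncAbsRpow ha hδ, ← integral_sub_right_eq_self (truncAbsRpow a δ) s]
  exact setIntegral_le_integral ((integrable_truncAbsRpow ha hδ).comp_sub_right s)
    (Eventually.of_forall fun t => truncAbsRpow_nonneg a δ (t - s))

lemma integrableOn_abs_sub_rpow (ha : -1 < a) (s c d : ℝ) :
    IntegrableOn (fun t => |t - s| ^ a) (Icc c d) := by
  have hδ : 0 < |c - s| + |d - s| + 1 := by positivity
  refine ((integrable_truncAbsRpow ha hδ).comp_sub_right s).integrableOn.congr_fun
    (fun t ht => truncAbsRpow_of_abs_lt ?_) measurableSet_Icc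
  have h : |t - s| ≤ max |c - s| |d - s| :=
    abs_le_max_abs_abs (by linarith [ht.1]) (by linarith [ht.2])
  linarith [max_le_add_of_nonneg (abs_nonneg (c - s)) (abs_nonneg (d - s))]

lemma exists_abs_rpow_le_truncAbsRpow_add_exp (a : ℝ) {c : ℝ} (hc : 0 < c) :
    ∃ C, 0 ≤ C ∧ ∀ x, |x| ^ a ≤ truncAbsRpow a 1 x + C * exp (c * |x|) := by
  set N := ⌈a⌉₊
  refine ⟨N.factorial / c ^ N, by positivity, fun x => ?_⟩
  rcases lt_or_ge |x| 1 with hx | hx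
  · rw [truncAbsRpow_of_abs_lt hx, le_add_iff_nonneg_right]
    positivity
  · calc |x| ^ a ≤ |x| ^ (N : ℝ) := rpow_le_rpow_of_exponent_le hx (Nat.le_ceil a)
      _ = N.factorial / c ^ N * ((c * |x|) ^ N / N.factorial) := by
        rw [rpow_natCast, mul_pow]
        field_simp
      _ ≤ N.factorial / c ^ N * exp (c * |x|) := by
        gcongr
        exact pow_div_factorial_le_exp _ (by positivity) N
      _ ≤ truncAbsRpow a 1 x + N.factorial / c ^ N * exp (c * |x|) :=
        le_add_of_nonneg_left (truncAbsRpow_nonneg a 1 x)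

end TruncatedPower

section PowerWeight

variable {a s : ℝ}

lemma natCast_mul_pow_mul_one_sub_le_one (n : ℕ) {t : ℝ} (h₀ : 0 ≤ t) (h₁ : t ≤ 1) :
    n * t ^ n * (1 - t) ≤ 1 := by
  have h_sum : n * t ^ n ≤ ∑ k ∈ Finset.range n, t ^ k := by
    simpa using Finset.card_nsmul_le_sum (Finset.range n) (fun k => t ^ k) (t ^ n)
      fun k hk => pow_le_pow_of_le_one h₀ h₁ (Finset.mem_range.1 hk).le
  calc n * t ^ n * (1 - t) ≤ (∑ k ∈ Finset.range n, t ^ k) * (1 - t) := by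
        gcongr
    _ = 1 - t ^ n := geom_sum_mul_neg t n
    _ ≤ 1 := by linarith [pow_nonneg h₀ n]

lemma tendsto_natCast_mul_setIntegral_pow_mul {g : ℝ → ℝ} (hg : IntegrableOn g (Icc 0 1))
    (hg₁ : ContinuousWithinAt g (Icc 0 1) 1) :
    Tendsto (fun n : ℕ => n * ∫ t in Icc (0 : ℝ) 1, t ^ n * g t) atTop (𝓝 (g 1)) := by
  have h_peak := tendsto_setIntegral_pow_smul_of_unique_maximum_of_isCompact_of_integrableOn
    (c := id) isCompact_Icc continuousOn_id (fun y hy hy₁ => lt_of_le_of_ne hy.2 hy₁)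
    (fun y hy => hy.1) one_pos (by simp [closure_Ioo]) hg hg₁
  have h_mass (n : ℕ) : ∫ t in Icc (0 : ℝ) 1, t ^ n = ((n : ℝ) + 1)⁻¹ := by
    simp [integral_Icc_eq_integral_Ioc, ← intervalIntegral.integral_of_le]
  simp only [id, smul_eq_mul, h_mass, inv_inv] at h_peak
  have h := (tendsto_natCast_div_add_atTop (1 : ℝ)).mul h_peak
  rw [one_mul] at h
  refine h.congr fun n => ?_
  field_simp

/-- The Riesz potential `n ∫₀¹ tⁿ |t - s| ^ a dt` at `s` of the measure `n tⁿ dt` on `[0, 1]`,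
which tends to a unit mass at `1`. -/
noncomputable def powPotential (a : ℝ) (n : ℕ) (s : ℝ) : ℝ :=
  n * ∫ t in Icc (0 : ℝ) 1, t ^ n * |t - s| ^ a

lemma powPotential_nonneg (a : ℝ) (n : ℕ) (s : ℝ) : 0 ≤ powPotential a n s :=
  mul_nonneg n.cast_nonneg <| setIntegral_nonneg measurableSet_Icc fun t ht =>
    mul_nonneg (pow_nonneg ht.1 n) (by positivity)

lemma stronglyMeasurable_powPotential (a : ℝ) (n : ℕ) : StronglyMeasurable (powPotential a n) := by
  refine (StronglyMeasurable.integral_prod_right (f := fun s t : ℝ => t ^ n * |t - s| ^ a)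
    (Measurable.stronglyMeasurable ?_)).const_mul _
  simp only [Function.uncurry_def]
  fun_prop

lemma tendsto_powPotential (ha : -1 < a) (hs : s < 1) :
    Tendsto (fun n => powPotential a n s) atTop (𝓝 ((1 - s) ^ a)) := by
  have hs' : 0 < 1 - s := sub_pos.2 hs
  have h_cont : ContinuousAt (fun t : ℝ => |t - s| ^ a) 1 :=
    ContinuousAt.rpow_const (by fun_prop) (Or.inl (abs_ne_zero.2 hs'.ne'))
  simpa only [powPotential, abs_of_pos hs'] using
    tendsto_natCast_mul_setIntegral_pow_mul (integrableOn_abs_sub_rpow ha s 0 1)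
      h_cont.continuousWithinAt

lemma integrableOn_pow_mul_abs_sub_rpow (ha : -1 < a) (n : ℕ) (s : ℝ) :
    IntegrableOn (fun t => t ^ n * |t - s| ^ a) (Icc 0 1) :=
  (integrableOn_abs_sub_rpow ha s 0 1).continuousOn_mul (by fun_prop) isCompact_Icc

-- Points within `d` of `s` are at distance at least `d` from `1`, where `n tⁿ ≤ (1 - t)⁻¹ ≤ d⁻¹`.
lemma natCast_mul_pow_mul_abs_sub_rpow_le (ha : a ≤ 0) (n : ℕ) {d t : ℝ} (hd : 0 < d)
    (hs : s + 2 * d ≤ 1) (ht : t ∈ Icc (0 : ℝ) 1) :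
    n * (t ^ n * |t - s| ^ a) ≤ d ^ a * (n * t ^ n) + d⁻¹ * truncAbsRpow a d (t - s) := by
  have h_weight : 0 ≤ n * t ^ n := mul_nonneg n.cast_nonneg (pow_nonneg ht.1 n)
  rw [← mul_assoc]
  rcases lt_or_ge |t - s| d with h | h
  · have h_dist : d ≤ 1 - t := by linarith [(abs_lt.1 h).2]
    have h_le : n * t ^ n ≤ d⁻¹ := by
      rw [← one_div, le_div_iff₀ hd]
      exact (mul_le_mul_of_nonneg_left h_dist h_weight).trans
        (natCast_mul_pow_mul_one_sub_le_one n ht.1 ht.2)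
    rw [truncAbsRpow_of_abs_lt h]
    exact le_add_of_nonneg_of_le (by positivity) (by gcongr)
  · calc n * t ^ n * |t - s| ^ a ≤ n * t ^ n * d ^ a := by
          gcongr n * t ^ n * ?_
          exact rpow_le_rpow_of_nonpos hd h ha
      _ = d ^ a * (n * t ^ n) := mul_comm _ _
      _ ≤ d ^ a * (n * t ^ n) + d⁻¹ * truncAbsRpow a d (t - s) :=
        le_add_of_nonneg_right (mul_nonneg (by positivity) (truncAbsRpow_nonneg a d (t - s)))

lemma powPotential_le_of_nonpos (ha : -1 < a) (ha₀ : a ≤ 0) (n : ℕ) {d : ℝ} (hd : 0 < d)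
    (hs : s + 2 * d ≤ 1) : powPotential a n s ≤ (1 + 2 / (a + 1)) * d ^ a := by
  have h_pow : IntegrableOn (fun t : ℝ => d ^ a * (n * t ^ n)) (Icc 0 1) :=
    Continuous.integrableOn_Icc (by fun_prop)
  have h_trunc : IntegrableOn (fun t => d⁻¹ * truncAbsRpow a d (t - s)) (Icc 0 1) :=
    (((integrable_truncAbsRpow ha hd).comp_sub_right s).const_mul _).integrableOn
  have h_mass : ∫ t in Icc (0 : ℝ) 1, n * t ^ n ≤ 1 := by
    simp only [integral_Icc_eq_integral_Ioc, ← intervalIntegral.integral_of_le zero_le_one,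
      intervalIntegral.integral_const_mul, integral_pow]
    simpa [← div_eq_mul_inv] using div_le_one_of_le₀ (by linarith) (by positivity)
  calc powPotential a n s = ∫ t in Icc (0 : ℝ) 1, n * (t ^ n * |t - s| ^ a) :=
        (integral_const_mul _ _).symm
    _ ≤ ∫ t in Icc (0 : ℝ) 1, (d ^ a * (n * t ^ n) + d⁻¹ * truncAbsRpow a d (t - s)) :=
        setIntegral_mono_on ((integrableOn_pow_mul_abs_sub_rpow ha n s).const_mul _)
          (h_pow.add h_trunc) measurableSet_Icc
          fun t ht => natCast_mul_pow_mul_abs_sub_rpow_le ha₀ n hd hs ht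
    _ = d ^ a * (∫ t in Icc (0 : ℝ) 1, n * t ^ n)
          + d⁻¹ * ∫ t in Icc (0 : ℝ) 1, truncAbsRpow a d (t - s) := by
        rw [integral_add h_pow h_trunc, integral_const_mul (d ^ a), integral_const_mul d⁻¹]
    _ ≤ d ^ a * 1 + d⁻¹ * (2 * (d ^ (a + 1) / (a + 1))) := by
        gcongr
        exact setIntegral_truncAbsRpow_sub_le ha hd s _
    _ = (1 + 2 / (a + 1)) * d ^ a := by
        rw [rpow_add_one hd.ne']
        field_simp

lemma rpow_le_rpow_min_zero {x : ℝ} (h₀ : 0 ≤ x) (h₁ : x ≤ 1) (a : ℝ) : x ^ a ≤ x ^ min a 0 := by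
  rcases le_total a 0 with ha | ha
  · rw [min_eq_left ha]
  · rw [min_eq_right ha, rpow_zero]
    exact rpow_le_one h₀ h₁ ha

lemma powPotential_le_min_zero (ha : -1 < a) (n : ℕ) (hs : s ∈ Icc (0 : ℝ) 1) :
    powPotential a n s ≤ powPotential (min a 0) n s := by
  refine mul_le_mul_of_nonneg_left (setIntegral_mono_on (integrableOn_pow_mul_abs_sub_rpow ha n s)
    (integrableOn_pow_mul_abs_sub_rpow (lt_min ha (by norm_num)) n s) measurableSet_Icc
    fun t ht => ?_) n.cast_nonneg
  have h_dist : |t - s| ≤ 1 := abs_le.2 ⟨by linarith [ht.1, hs.2], by linarith [ht.2, hs.1]⟩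
  exact mul_le_mul_of_nonneg_left (rpow_le_rpow_min_zero (abs_nonneg _) h_dist a)
    (pow_nonneg ht.1 n)

lemma integrableOn_one_sub_rpow (ha : -1 < a) :
    IntegrableOn (fun s : ℝ => (1 - s) ^ a) (Ioo 0 1) := by
  refine ((integrableOn_abs_sub_rpow ha 1 0 1).mono_set Ioo_subset_Icc_self).congr_fun
    (fun s hs => ?_) measurableSet_Ioo
  simp only [abs_sub_comm s 1, abs_of_pos (sub_pos.2 hs.2)]

lemma exists_integrableOn_powPotential_le (ha : -1 < a) :
    ∃ g : ℝ → ℝ, IntegrableOn g (Ioo 0 1) ∧ ∀ n, ∀ s ∈ Ioo (0 : ℝ) 1, powPotential a n s ≤ g s := by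
  have ha' : -1 < min a 0 := lt_min ha (by norm_num)
  refine ⟨fun s => (1 + 2 / (min a 0 + 1)) * ((1 - s) / 2) ^ min a 0, ?_, fun n s hs => ?_⟩
  · refine IntegrableOn.congr_fun (((integrableOn_one_sub_rpow ha').div_const
      (2 ^ min a 0)).const_mul (1 + 2 / (min a 0 + 1))) (fun s hs => ?_) measurableSet_Ioo
    simp only [div_rpow (sub_pos.2 hs.2).le zero_le_two]
  · exact (powPotential_le_min_zero ha n (Ioo_subset_Icc_self hs)).trans
      (powPotential_le_of_nonpos ha' (min_le_right a 0) n (by linarith [hs.2]) (by linarith))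

end PowerWeight

section RieszEnergy

/-- The mutual Riesz energy `∫∫ f(u) g(v) |u - v| ^ b du dv` of two densities on the line. -/
noncomputable def rieszEnergy (b : ℝ) (f g : ℝ → ℝ) : ℝ :=
  ∫ p : ℝ × ℝ, f p.1 * g p.2 * |p.1 - p.2| ^ b

variable {b : ℝ} {f g F G : ℝ → ℝ}

lemma integrable_rieszEnergy_mono (hf : Measurable f) (hg : Measurable g)
    (hf₀ : 0 ≤ f) (hg₀ : 0 ≤ g) (hfF : f ≤ F) (hgG : g ≤ G)
    (hFG : Integrable fun p : ℝ × ℝ => F p.1 * G p.2 * |p.1 - p.2| ^ b) :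
    Integrable fun p : ℝ × ℝ => f p.1 * g p.2 * |p.1 - p.2| ^ b := by
  refine hFG.mono' (Measurable.aestronglyMeasurable (by fun_prop))
    (Eventually.of_forall fun p => ?_)
  have hf_p : 0 ≤ f p.1 := hf₀ p.1
  have hg_p : 0 ≤ g p.2 := hg₀ p.2
  rw [norm_of_nonneg (by positivity)]
  gcongr
  exacts [hf_p.trans (hfF p.1), hfF p.1, hgG p.2]

lemma rieszEnergy_nonneg (b : ℝ) (hf₀ : 0 ≤ f) (hg₀ : 0 ≤ g) : 0 ≤ rieszEnergy b f g :=
  integral_nonneg fun p => mul_nonneg (mul_nonneg (hf₀ p.1) (hg₀ p.2)) (by positivity)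

lemma rieszEnergy_mono (hf₀ : 0 ≤ f) (hg₀ : 0 ≤ g) (hfF : f ≤ F) (hgG : g ≤ G)
    (hFG : Integrable fun p : ℝ × ℝ => F p.1 * G p.2 * |p.1 - p.2| ^ b) :
    rieszEnergy b f g ≤ rieszEnergy b F G := by
  refine integral_mono_of_nonneg (Eventually.of_forall fun p => ?_) hFG
    (Eventually.of_forall fun p => ?_)
  · exact mul_nonneg (mul_nonneg (hf₀ p.1) (hg₀ p.2)) (by positivity)
  · exact mul_le_mul_of_nonneg_right
      (mul_le_mul (hfF p.1) (hgG p.2) (hg₀ p.2) ((hf₀ p.1).trans (hfF p.1))) (by positivity)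

lemma tendsto_rieszEnergy {ι : Type*} {l : Filter ι} [l.IsCountablyGenerated] {f g : ι → ℝ → ℝ}
    (hf : ∀ i, Measurable (f i)) (hg : ∀ i, Measurable (g i))
    (hf₀ : ∀ i, 0 ≤ f i) (hg₀ : ∀ i, 0 ≤ g i) (hfF : ∀ i, f i ≤ F) (hgG : ∀ i, g i ≤ G)
    (hFG : Integrable fun p : ℝ × ℝ => F p.1 * G p.2 * |p.1 - p.2| ^ b)
    (hf_lim : ∀ u, Tendsto (fun i => f i u) l (𝓝 (F u)))
    (hg_lim : ∀ u, Tendsto (fun i => g i u) l (𝓝 (G u))) :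
    Tendsto (fun i => rieszEnergy b (f i) (g i)) l (𝓝 (rieszEnergy b F G)) := by
  refine tendsto_integral_filter_of_dominated_convergence _
    (Eventually.of_forall fun i => Measurable.aestronglyMeasurable (by fun_prop))
    (Eventually.of_forall fun i => Eventually.of_forall fun p => ?_) hFG
    (Eventually.of_forall fun p => ((hf_lim p.1).mul (hg_lim p.2)).mul_const _)
  have hf_p : 0 ≤ f i p.1 := hf₀ i p.1
  have hg_p : 0 ≤ g i p.2 := hg₀ i p.2
  rw [norm_of_nonneg (by positivity)]
  gcongr
  exacts [hf_p.trans (hfF i p.1), hfF i p.1, hgG i p.2]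

lemma rieszEnergy_eq_integral_integral
    (h : Integrable fun p : ℝ × ℝ => f p.1 * g p.2 * |p.1 - p.2| ^ b) :
    rieszEnergy b f g = ∫ u, f u * ∫ v, g v * |u - v| ^ b := by
  rw [rieszEnergy, Measure.volume_eq_prod, integral_prod _ h]
  simp_rw [mul_assoc, integral_const_mul]

end RieszEnergy

section ExponentialDensity

/-- The unnormalised exponential density `e ^ (-c u)` on `(0, ∞)`, extended by zero. -/
noncomputable def expDensity (c u : ℝ) : ℝ := (Ioi 0).indicator (fun u => exp (-c * u)) u

variable {b c : ℝ}

lemma expDensity_nonneg (c u : ℝ) : 0 ≤ expDensity c u :=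
  indicator_nonneg (fun _ _ => by positivity) u

lemma measurable_expDensity (c : ℝ) : Measurable (expDensity c) :=
  Measurable.indicator (by fun_prop) measurableSet_Ioi

lemma integrable_expDensity (hc : 0 < c) : Integrable (expDensity c) :=
  (integrable_indicator_iff measurableSet_Ioi).2 (exp_neg_integrableOn_Ioi 0 hc)

lemma expDensity_le_one (hc : 0 ≤ c) (u : ℝ) : expDensity c u ≤ 1 :=
  indicator_le' (fun u hu => exp_le_one_iff.2 (by nlinarith [mem_Ioi.1 hu]))
    (fun _ _ => zero_le_one) u

lemma expDensity_mul_expDensity_mul_exp_le (hc : 0 ≤ c) (u v : ℝ) :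
    expDensity c u * expDensity c v * exp (c / 2 * |u - v|)
      ≤ expDensity (c / 2) u * expDensity (c / 2) v := by
  by_cases hu : u ∈ Ioi (0 : ℝ)
  · by_cases hv : v ∈ Ioi (0 : ℝ)
    · have h_dist : |u - v| ≤ u + v :=
        abs_sub_le_iff.2 ⟨by linarith [mem_Ioi.1 hv], by linarith [mem_Ioi.1 hu]⟩
      simp only [expDensity, indicator_of_mem hu, indicator_of_mem hv, ← exp_add]
      exact exp_le_exp.2 (by nlinarith)
    · simp [expDensity, indicator_of_notMem hv]
  · simp [expDensity, indicator_of_notMem hu]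

lemma integrable_expDensity_mul_abs_sub_rpow (hb : -1 < b) (hc : 0 < c) :
    Integrable fun p : ℝ × ℝ => expDensity c p.1 * expDensity c p.2 * |p.1 - p.2| ^ b := by
  obtain ⟨C, hC₀, hC⟩ := exists_abs_rpow_le_truncAbsRpow_add_exp b (half_pos hc)
  have h_exp : Measurable (expDensity c) := measurable_expDensity c
  have h_near : Integrable fun p : ℝ × ℝ => expDensity c p.2 * truncAbsRpow b 1 (p.1 - p.2) :=
    (integrable_expDensity hc).convolution_integrand (ContinuousLinearMap.mul ℝ ℝ)
      (integrable_truncAbsRpow hb one_pos)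
  have h_far : Integrable fun p : ℝ × ℝ => expDensity (c / 2) p.1 * expDensity (c / 2) p.2 :=
    (integrable_expDensity (half_pos hc)).mul_prod (integrable_expDensity (half_pos hc))
  refine (h_near.add (h_far.const_mul C)).mono' (Measurable.aestronglyMeasurable (by fun_prop))
    (Eventually.of_forall fun ⟨u, v⟩ => ?_)
  have hu := expDensity_nonneg c u
  have hv := expDensity_nonneg c v
  have h_trunc := truncAbsRpow_nonneg b 1 (u - v)
  rw [norm_of_nonneg (by positivity)]
  calc expDensity c u * expDensity c v * |u - v| ^ b
      ≤ expDensity c u * expDensity c v *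
          (truncAbsRpow b 1 (u - v) + C * exp (c / 2 * |u - v|)) := by
        gcongr
        exact hC _
    _ = expDensity c u * (expDensity c v * truncAbsRpow b 1 (u - v))
          + C * (expDensity c u * expDensity c v * exp (c / 2 * |u - v|)) := by ring
    _ ≤ expDensity c v * truncAbsRpow b 1 (u - v)
          + C * (expDensity (c / 2) u * expDensity (c / 2) v) :=
        add_le_add (mul_le_of_le_one_left (by positivity) (expDensity_le_one hc.le u))
          (mul_le_mul_of_nonneg_left (expDensity_mul_expDensity_mul_exp_le hc.le u v) hC₀)

lemma integral_eq_integral_expDensity_mul (F : ℝ → ℝ) :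
    ∫ x in (0 : ℝ)..1, F x = ∫ u, expDensity 1 u * F (exp (-u)) := by
  have h_image : (fun u : ℝ => exp (-u)) '' Ioi 0 = Ioo 0 1 := by
    ext x
    constructor
    · rintro ⟨u, hu, rfl⟩
      exact ⟨exp_pos _, by simpa using hu⟩
    · rintro ⟨h₀, h₁⟩
      exact ⟨-log x, by simpa using log_neg h₀ h₁, by simp [exp_log h₀]⟩
  have h_deriv (u : ℝ) : HasDerivAt (fun u : ℝ => exp (-u)) (-exp (-u)) u := by
    simpa using (hasDerivAt_neg u).exp
  have h_subst := integral_image_eq_integral_abs_deriv_smul (s := Ioi (0 : ℝ))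
    (f := fun u => exp (-u)) (f' := fun u => -exp (-u)) measurableSet_Ioi
    (fun u _ => (h_deriv u).hasDerivWithinAt) (fun u _ v _ h => by simpa using h) F
  rw [intervalIntegral.integral_of_le zero_le_one, integral_Ioc_eq_integral_Ioo, ← h_image,
    h_subst, ← integral_indicator measurableSet_Ioi]
  simp [expDensity, indicator_mul_left]

lemma integral_integral_abs_log_sub_log_rpow (hb : -1 < b) :
    ∫ x₁ in (0 : ℝ)..1, ∫ x₂ in (0 : ℝ)..1, |log x₁ - log x₂| ^ b
      = rieszEnergy b (expDensity 1) (expDensity 1) := by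
  rw [rieszEnergy_eq_integral_integral (integrable_expDensity_mul_abs_sub_rpow hb one_pos)]
  simp_rw [integral_eq_integral_expDensity_mul, log_exp, neg_sub_neg, abs_sub_comm]

end ExponentialDensity

section RescaledPower

/-- The weight `θ ^ n` on `[s, 1)` in the variable `u = n (1 - θ)`, extended by zero. -/
noncomputable def rescaledPow (n : ℕ) (s u : ℝ) : ℝ :=
  (Ioc 0 (n * (1 - s))).indicator (fun u => (1 - u / n) ^ n) u

variable {b s s₁ s₂ : ℝ} {n : ℕ}

lemma measurable_rescaledPow (n : ℕ) : Measurable fun p : ℝ × ℝ => rescaledPow n p.1 p.2 := by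
  have h_meas : MeasurableSet {p : ℝ × ℝ | 0 < p.2 ∧ p.2 ≤ n * (1 - p.1)} :=
    (measurableSet_lt measurable_const measurable_snd).inter
      (measurableSet_le (f := fun p : ℝ × ℝ => p.2) (by fun_prop) (by fun_prop))
  exact Measurable.indicator (f := fun p : ℝ × ℝ => (1 - p.2 / n) ^ n) (by fun_prop) h_meas

lemma rescaledPow_nonneg (n : ℕ) (hs : 0 ≤ s) : 0 ≤ rescaledPow n s :=
  indicator_nonneg fun u hu => by
    have h_le : u ≤ n := hu.2.trans (mul_le_of_le_one_right n.cast_nonneg (by linarith))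
    exact pow_nonneg (sub_nonneg.2 (div_le_one_of_le₀ h_le n.cast_nonneg)) n

lemma rescaledPow_le_expDensity (n : ℕ) (hs : 0 ≤ s) : rescaledPow n s ≤ expDensity 1 := by
  intro u
  by_cases hu : u ∈ Ioc 0 (n * (1 - s))
  · have h_le : u ≤ n := hu.2.trans (mul_le_of_le_one_right n.cast_nonneg (by linarith))
    rw [rescaledPow, indicator_of_mem hu, expDensity, indicator_of_mem (mem_Ioi.2 hu.1),
      neg_one_mul]
    exact one_sub_div_pow_le_exp_neg h_le
  · rw [rescaledPow, indicator_of_notMem hu]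
    exact expDensity_nonneg 1 u

lemma tendsto_rescaledPow (hs : s < 1) (u : ℝ) :
    Tendsto (fun n => rescaledPow n s u) atTop (𝓝 (expDensity 1 u)) := by
  by_cases hu : 0 < u
  · have h_width : Tendsto (fun n : ℕ => (n : ℝ) * (1 - s)) atTop atTop :=
      tendsto_natCast_atTop_atTop.atTop_mul_const (sub_pos.2 hs)
    rw [expDensity, indicator_of_mem (mem_Ioi.2 hu), neg_one_mul]
    refine (tendsto_one_add_div_pow_exp (-u)).congr' ?_
    filter_upwards [h_width.eventually_ge_atTop u] with n hn
    rw [rescaledPow, indicator_of_mem (mem_Ioc.2 ⟨hu, hn⟩), neg_div, ← sub_eq_add_neg]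
  · simp [rescaledPow, expDensity, hu]

lemma integral_pow_mul_eq_integral_rescaledPow_mul (hn : n ≠ 0) (hs : s ≤ 1) (F : ℝ → ℝ) :
    ∫ θ in s..1, θ ^ n * F θ = (n : ℝ)⁻¹ * ∫ u, rescaledPow n s u * F (1 - u / n) := by
  have hn' : (n : ℝ) ≠ 0 := Nat.cast_ne_zero.2 hn
  have h_width : 0 ≤ n * (1 - s) := mul_nonneg n.cast_nonneg (sub_nonneg.2 hs)
  have h_indicator (u : ℝ) : rescaledPow n s u * F (1 - u / n)
      = (Ioc 0 (n * (1 - s))).indicator (fun u => (1 - u / n) ^ n * F (1 - u / n)) u :=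
    (indicator_mul_left _ _ fun u => F (1 - u / n)).symm
  have h_subst := intervalIntegral.integral_comp_sub_div (a := 0) (b := n * (1 - s))
    (fun θ => θ ^ n * F θ) hn' 1
  rw [mul_div_cancel_left₀ _ hn', sub_sub_cancel, zero_div, sub_zero, smul_eq_mul,
    intervalIntegral.integral_of_le h_width, ← integral_indicator measurableSet_Ioc] at h_subst
  simp_rw [h_indicator, h_subst]
  rw [inv_mul_cancel_left₀ hn']

lemma integrable_rescaledPow_mul_abs_sub_rpow (hb : -1 < b) (n : ℕ) (hs₁ : 0 ≤ s₁)
    (hs₂ : 0 ≤ s₂) :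
    Integrable fun p : ℝ × ℝ => rescaledPow n s₁ p.1 * rescaledPow n s₂ p.2 * |p.1 - p.2| ^ b :=
  integrable_rieszEnergy_mono ((measurable_rescaledPow n).of_uncurry_left)
    ((measurable_rescaledPow n).of_uncurry_left) (rescaledPow_nonneg n hs₁)
    (rescaledPow_nonneg n hs₂) (rescaledPow_le_expDensity n hs₁) (rescaledPow_le_expDensity n hs₂)
    (integrable_expDensity_mul_abs_sub_rpow hb one_pos)

lemma natCast_rpow_mul_integral_integral_eq_rieszEnergy (hb : -1 < b) (hn : n ≠ 0)
    (hs₁ : s₁ ∈ Icc (0 : ℝ) 1) (hs₂ : s₂ ∈ Icc (0 : ℝ) 1) :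
    (n : ℝ) ^ (2 + b) * ∫ θ₁ in s₁..1, ∫ θ₂ in s₂..1, θ₁ ^ n * θ₂ ^ n * |θ₁ - θ₂| ^ b
      = rieszEnergy b (rescaledPow n s₁) (rescaledPow n s₂) := by
  have hn' : (0 : ℝ) < n := Nat.cast_pos.2 (Nat.pos_of_ne_zero hn)
  have h_scale (u v : ℝ) : |1 - u / n - (1 - v / n)| ^ b = (n : ℝ) ^ (-b) * |u - v| ^ b := by
    rw [sub_sub_sub_cancel_left, ← sub_div, abs_div, abs_of_pos hn', abs_sub_comm,
      div_rpow (abs_nonneg _) hn'.le, rpow_neg hn'.le, div_eq_inv_mul]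
  have h_pow : (n : ℝ) ^ (2 + b) * ((n : ℝ)⁻¹ * ((n : ℝ)⁻¹ * (n : ℝ) ^ (-b))) = 1 := by
    rw [← rpow_neg_one, ← rpow_add hn', ← rpow_add hn', ← rpow_add hn']
    ring_nf
    exact rpow_zero _
  rw [rieszEnergy_eq_integral_integral (integrable_rescaledPow_mul_abs_sub_rpow hb n hs₁.1 hs₂.1)]
  simp_rw [mul_assoc, intervalIntegral.integral_const_mul,
    integral_pow_mul_eq_integral_rescaledPow_mul hn hs₁.2,
    integral_pow_mul_eq_integral_rescaledPow_mul hn hs₂.2, h_scale,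
    mul_left_comm _ ((n : ℝ) ^ (-b)), integral_const_mul, mul_left_comm _ (n : ℝ)⁻¹,
    mul_left_comm _ ((n : ℝ) ^ (-b)), integral_const_mul]
  linear_combination (∫ u, rescaledPow n s₁ u * ∫ v, rescaledPow n s₂ v * |u - v| ^ b) * h_pow

lemma rieszEnergy_rescaledPow_le (hb : -1 < b) (n : ℕ) (hs₁ : 0 ≤ s₁) (hs₂ : 0 ≤ s₂) :
    rieszEnergy b (rescaledPow n s₁) (rescaledPow n s₂)
      ≤ rieszEnergy b (expDensity 1) (expDensity 1) :=
  rieszEnergy_mono (rescaledPow_nonneg n hs₁) (rescaledPow_nonneg n hs₂)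
    (rescaledPow_le_expDensity n hs₁) (rescaledPow_le_expDensity n hs₂)
    (integrable_expDensity_mul_abs_sub_rpow hb one_pos)

lemma tendsto_rieszEnergy_rescaledPow (hb : -1 < b) (hs₁ : s₁ ∈ Ico (0 : ℝ) 1)
    (hs₂ : s₂ ∈ Ico (0 : ℝ) 1) :
    Tendsto (fun n => rieszEnergy b (rescaledPow n s₁) (rescaledPow n s₂)) atTop
      (𝓝 (rieszEnergy b (expDensity 1) (expDensity 1))) :=
  tendsto_rieszEnergy (fun n => (measurable_rescaledPow n).of_uncurry_left)
    (fun n => (measurable_rescaledPow n).of_uncurry_left)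
    (fun n => rescaledPow_nonneg n hs₁.1) (fun n => rescaledPow_nonneg n hs₂.1)
    (fun n => rescaledPow_le_expDensity n hs₁.1) (fun n => rescaledPow_le_expDensity n hs₂.1)
    (integrable_expDensity_mul_abs_sub_rpow hb one_pos)
    (tendsto_rescaledPow hs₁.2) (tendsto_rescaledPow hs₂.2)

lemma stronglyMeasurable_rieszEnergy_rescaledPow (b : ℝ) (n : ℕ) :
    StronglyMeasurable fun p : ℝ × ℝ => rieszEnergy b (rescaledPow n p.1) (rescaledPow n p.2) := by
  have h_first : Measurable fun q : (ℝ × ℝ) × (ℝ × ℝ) => rescaledPow n q.1.1 q.2.1 :=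
    (measurable_rescaledPow n).comp (g := fun p : ℝ × ℝ => rescaledPow n p.1 p.2)
      (f := fun q : (ℝ × ℝ) × (ℝ × ℝ) => (q.1.1, q.2.1)) (by fun_prop)
  have h_second : Measurable fun q : (ℝ × ℝ) × (ℝ × ℝ) => rescaledPow n q.1.2 q.2.2 :=
    (measurable_rescaledPow n).comp (g := fun p : ℝ × ℝ => rescaledPow n p.1 p.2)
      (f := fun q : (ℝ × ℝ) × (ℝ × ℝ) => (q.1.2, q.2.2)) (by fun_prop)
  refine StronglyMeasurable.integral_prod_right (f := fun p q : ℝ × ℝ =>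
    rescaledPow n p.1 q.1 * rescaledPow n p.2 q.2 * |q.1 - q.2| ^ b)
    (Measurable.stronglyMeasurable ?_)
  simp only [Function.uncurry_def]
  fun_prop

end RescaledPower

section UnitSquare

/-- What remains as a function of `p = (s₁, s₂)` of the integrand of `n ^ (4 + b)` times the
four-fold integral, once `t₁`, `t₂` are integrated out and `θ₁`, `θ₂` rescaled. -/
noncomputable def reducedIntegrand (a b : ℝ) (n : ℕ) (p : ℝ × ℝ) : ℝ :=
  powPotential a n p.1 * powPotential a n p.2
    * rieszEnergy b (rescaledPow n p.1) (rescaledPow n p.2)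

variable {a b : ℝ} {n : ℕ}

lemma integral_zero_one_eq_setIntegral_Ioo (F : ℝ → ℝ) :
    ∫ s in (0 : ℝ)..1, F s = ∫ s in Ioo (0 : ℝ) 1, F s := by
  rw [intervalIntegral.integral_of_le zero_le_one, integral_Ioc_eq_integral_Ioo]

lemma stronglyMeasurable_reducedIntegrand (a b : ℝ) (n : ℕ) :
    StronglyMeasurable (reducedIntegrand a b n) :=
  (((stronglyMeasurable_powPotential a n).comp_measurable measurable_fst).mul
    ((stronglyMeasurable_powPotential a n).comp_measurable measurable_snd)).mul
    (stronglyMeasurable_rieszEnergy_rescaledPow b n)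

lemma exists_integrableOn_norm_reducedIntegrand_le (ha : -1 < a) (hb : -1 < b) :
    ∃ G : ℝ × ℝ → ℝ, IntegrableOn G (Ioo 0 1 ×ˢ Ioo 0 1) ∧
      ∀ n, ∀ p ∈ Ioo (0 : ℝ) 1 ×ˢ Ioo (0 : ℝ) 1, ‖reducedIntegrand a b n p‖ ≤ G p := by
  obtain ⟨g, hg, hg_le⟩ := exists_integrableOn_powPotential_le ha
  refine ⟨fun p => g p.1 * g p.2 * rieszEnergy b (expDensity 1) (expDensity 1), ?_, ?_⟩
  · rw [IntegrableOn, Measure.volume_eq_prod, ← Measure.prod_restrict]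
    exact (hg.mul_prod hg).mul_const _
  · rintro n ⟨s₁, s₂⟩ ⟨hs₁, hs₂⟩
    have h_fst := powPotential_nonneg a n s₁
    have h_snd := powPotential_nonneg a n s₂
    have h_energy := rieszEnergy_nonneg b (rescaledPow_nonneg n hs₁.1.le)
      (rescaledPow_nonneg n hs₂.1.le)
    rw [reducedIntegrand, norm_of_nonneg (by positivity)]
    exact mul_le_mul (mul_le_mul (hg_le n s₁ hs₁) (hg_le n s₂ hs₂) h_snd
      (h_fst.trans (hg_le n s₁ hs₁))) (rieszEnergy_rescaledPow_le hb n hs₁.1.le hs₂.1.le) h_energy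
      (mul_nonneg (h_fst.trans (hg_le n s₁ hs₁)) (h_snd.trans (hg_le n s₂ hs₂)))

lemma integrableOn_reducedIntegrand (ha : -1 < a) (hb : -1 < b) (n : ℕ) :
    IntegrableOn (reducedIntegrand a b n) (Ioo 0 1 ×ˢ Ioo 0 1) := by
  obtain ⟨G, hG, hG_le⟩ := exists_integrableOn_norm_reducedIntegrand_le ha hb
  exact Integrable.mono' hG (stronglyMeasurable_reducedIntegrand a b n).aestronglyMeasurable
    (ae_restrict_of_forall_mem (measurableSet_Ioo.prod measurableSet_Ioo) (hG_le n))

lemma tendsto_setIntegral_reducedIntegrand (ha : -1 < a) (hb : -1 < b) :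
    Tendsto (fun n => ∫ p in Ioo 0 1 ×ˢ Ioo 0 1, reducedIntegrand a b n p) atTop
      (𝓝 ((∫ s in Ioo (0 : ℝ) 1, (1 - s) ^ a) * (∫ s in Ioo (0 : ℝ) 1, (1 - s) ^ a)
        * rieszEnergy b (expDensity 1) (expDensity 1))) := by
  obtain ⟨G, hG, hG_le⟩ := exists_integrableOn_norm_reducedIntegrand_le ha hb
  have h_square : MeasurableSet (Ioo (0 : ℝ) 1 ×ˢ Ioo (0 : ℝ) 1) :=
    measurableSet_Ioo.prod measurableSet_Ioo
  rw [← setIntegral_prod_mul, ← integral_mul_const]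
  refine tendsto_integral_of_dominated_convergence G
    (fun n => (stronglyMeasurable_reducedIntegrand a b n).aestronglyMeasurable) hG
    (fun n => ae_restrict_of_forall_mem h_square (hG_le n))
    (ae_restrict_of_forall_mem h_square fun p hp => ?_)
  exact ((tendsto_powPotential ha hp.1.2).mul (tendsto_powPotential ha hp.2.2)).mul
    (tendsto_rieszEnergy_rescaledPow hb (Ioo_subset_Ico_self hp.1) (Ioo_subset_Ico_self hp.2))

lemma natCast_mul_integral_pow_mul_eq_powPotential (a : ℝ) (n : ℕ) (s : ℝ) :
    n * ∫ t in (0 : ℝ)..1, t ^ n * |t - s| ^ a = powPotential a n s := by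
  rw [powPotential, intervalIntegral.integral_of_le zero_le_one, integral_Icc_eq_integral_Ioc]

lemma integral_integral_integral_pow_mul_eq_mul (a : ℝ) (n : ℕ) (s₁ : ℝ) (G : ℝ → ℝ) :
    ∫ t₁ in (0 : ℝ)..1, ∫ s₂ in (0 : ℝ)..1, ∫ t₂ in (0 : ℝ)..1,
        t₁ ^ n * t₂ ^ n * G s₂ * |t₁ - s₁| ^ a * |t₂ - s₂| ^ a
      = (∫ t₁ in (0 : ℝ)..1, t₁ ^ n * |t₁ - s₁| ^ a)
        * ∫ s₂ in (0 : ℝ)..1, (∫ t₂ in (0 : ℝ)..1, t₂ ^ n * |t₂ - s₂| ^ a) * G s₂ := by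
  have h_factor (t₁ s₂ t₂ : ℝ) : t₁ ^ n * t₂ ^ n * G s₂ * |t₁ - s₁| ^ a * |t₂ - s₂| ^ a
      = t₁ ^ n * |t₁ - s₁| ^ a * (t₂ ^ n * |t₂ - s₂| ^ a * G s₂) := by ring
  simp_rw [h_factor, intervalIntegral.integral_const_mul, intervalIntegral.integral_mul_const]

lemma natCast_rpow_mul_integral_eq_setIntegral_reducedIntegrand (ha : -1 < a) (hb : -1 < b)
    (hn : n ≠ 0) :
    (n : ℝ) ^ (4 + b) * ∫ s₁ in (0 : ℝ)..1, ∫ t₁ in (0 : ℝ)..1, ∫ s₂ in (0 : ℝ)..1,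
        ∫ t₂ in (0 : ℝ)..1, t₁ ^ n * t₂ ^ n *
          (∫ θ₁ in s₁..1, ∫ θ₂ in s₂..1, θ₁ ^ n * θ₂ ^ n * |θ₁ - θ₂| ^ b) *
          |t₁ - s₁| ^ a * |t₂ - s₂| ^ a
      = ∫ p in Ioo 0 1 ×ˢ Ioo 0 1, reducedIntegrand a b n p := by
  have hn' : (n : ℝ) ≠ 0 := Nat.cast_ne_zero.2 hn
  have h_pow : (n : ℝ) ^ (4 + b) = n * (n * (n : ℝ) ^ (2 + b)) := by
    rw [show 4 + b = 2 + b + 1 + 1 by ring, rpow_add_one hn', rpow_add_one hn']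
    ring
  rw [Measure.volume_eq_prod, setIntegral_prod _ (integrableOn_reducedIntegrand ha hb n),
    integral_zero_one_eq_setIntegral_Ioo, ← integral_const_mul]
  refine setIntegral_congr_fun measurableSet_Ioo fun s₁ hs₁ => ?_
  rw [integral_integral_integral_pow_mul_eq_mul a n s₁
      (fun s₂ => ∫ θ₁ in s₁..1, ∫ θ₂ in s₂..1, θ₁ ^ n * θ₂ ^ n * |θ₁ - θ₂| ^ b), h_pow,
    mul_mul_mul_comm, natCast_mul_integral_pow_mul_eq_powPotential,
    integral_zero_one_eq_setIntegral_Ioo, ← integral_const_mul, ← integral_const_mul]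
  refine setIntegral_congr_fun measurableSet_Ioo fun s₂ hs₂ => ?_
  rw [mul_mul_mul_comm, natCast_mul_integral_pow_mul_eq_powPotential,
    natCast_rpow_mul_integral_integral_eq_rieszEnergy hb hn (Ioo_subset_Icc_self hs₁)
      (Ioo_subset_Icc_self hs₂), ← mul_assoc, reducedIntegrand]

end UnitSquare

theorem stmt14_general {a b : ℝ} (ha : -1 < a) (hb : -1 < b) :
    Tendsto
      (fun n : ℕ => (n : ℝ) ^ (4 + b) *
        ∫ s₁ in (0 : ℝ)..1, ∫ t₁ in (0 : ℝ)..1, ∫ s₂ in (0 : ℝ)..1, ∫ t₂ in (0 : ℝ)..1,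
          t₁ ^ n * t₂ ^ n *
            (∫ θ₁ in s₁..1, ∫ θ₂ in s₂..1, θ₁ ^ n * θ₂ ^ n * |θ₁ - θ₂| ^ b) *
            |t₁ - s₁| ^ a * |t₂ - s₂| ^ a)
      atTop
      (𝓝 ((∫ s₁ in (0 : ℝ)..1, ∫ s₂ in (0 : ℝ)..1, (1 - s₁) ^ a * (1 - s₂) ^ a) *
        ∫ x₁ in (0 : ℝ)..1, ∫ x₂ in (0 : ℝ)..1, |log x₁ - log x₂| ^ b)) := by
  rw [integral_integral_abs_log_sub_log_rpow hb]
  simp_rw [intervalIntegral.integral_const_mul, intervalIntegral.integral_mul_const,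
    integral_zero_one_eq_setIntegral_Ioo fun s => (1 - s) ^ a]
  refine (tendsto_setIntegral_reducedIntegrand ha hb).congr' ?_
  filter_upwards [eventually_ne_atTop 0] with n hn
  exact (natCast_rpow_mul_integral_eq_setIntegral_reducedIntegrand ha hb hn).symm

/-- Identification of the asymptotic variance `σ²_{H,2}` for `H ∈ (1/2,1)`:
`H³(2H−1)³ n^{2+2H} ∫_{[0,1]⁴} t₁ⁿt₂ⁿ (∫_{s₁}^1∫_{s₂}^1 θ₁ⁿθ₂ⁿ|θ₁−θ₂|^{2H−2} dθ₁dθ₂)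
|t₁−s₁|^{2H−2}|t₂−s₂|^{2H−2} ds₁dt₁ds₂dt₂ → σ²_{H,2}` as `n → ∞`. -/
theorem stmt14 (H : ℝ) (hH : H ∈ Set.Ioo (1/2 : ℝ) 1) :
    Tendsto
      (fun n : ℕ => H ^ 3 * (2 * H - 1) ^ 3 * (n:ℝ) ^ (2 + 2 * H) *
        ∫ s₁ in (0:ℝ)..1, ∫ t₁ in (0:ℝ)..1, ∫ s₂ in (0:ℝ)..1, ∫ t₂ in (0:ℝ)..1,
          t₁ ^ n * t₂ ^ n *
            (∫ θ₁ in s₁..1, ∫ θ₂ in s₂..1, θ₁ ^ n * θ₂ ^ n * |θ₁ - θ₂| ^ (2 * H - 2)) *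
            |t₁ - s₁| ^ (2 * H - 2) * |t₂ - s₂| ^ (2 * H - 2))
      atTop
      (nhds (H ^ 3 * (2 * H - 1) ^ 3 *
        (∫ s₁ in (0:ℝ)..1, ∫ s₂ in (0:ℝ)..1, (1 - s₁) ^ (2 * H - 2) * (1 - s₂) ^ (2 * H - 2)) *
        (∫ x₁ in (0:ℝ)..1, ∫ x₂ in (0:ℝ)..1, |Real.log x₁ - Real.log x₂| ^ (2 * H - 2)))) := by
  have ha : -1 < 2 * H - 2 := by linarith [hH.1]
  simpa only [← mul_assoc, show 4 + (2 * H - 2) = 2 + 2 * H by ring] using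
    (stmt14_general ha ha).const_mul (H ^ 3 * (2 * H - 1) ^ 3)
end
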